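/- There is a universal constant C with the following property. Let Z = (Z_1, …, Z_n) be uniformly distributed on the unit sphere of ℂⁿ (with respect to the standard Hermitian norm). Let B_1, …, B_d be traceless n×n complex Hermitian matrices with tr(B_j B_k) = δ_{jk}, and for j = 1, …, d let X_j = ⟨B_j Z, Z⟩ (a real number since B_j is Hermitian). Let g be a standard Gaussian random vector in ℝ^d. Then W₁( √(n(n+1)) · X , g ) ≤ C · Σ_{j=1}^d ‖B_j‖₄², where ‖B‖₄ = (tr(B⁴))^{1/4} is the Schatten 4-norm of a Hermitian matrix B; in particular this bound implies W₁(√(n(n+1)) X, g) ≤ C Σ_{j=1}^d ‖B_j‖_op, since ‖B_j‖₄² ≤ ‖B_j‖_op when tr(B_j²)=1. -/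

import Mathlib

open MeasureTheory ProbabilityTheory Matrix
open scoped Matrix

universe u

/-- Operator (ℓ²→ℓ²) norm of a complex square matrix. -/
noncomputable def opNormC {n : ℕ} (M : Matrix (Fin n) (Fin n) ℂ) : ℝ :=
  ‖Matrix.toEuclideanCLM (𝕜 := ℂ) M‖

open MeasureTheory ProbabilityTheory Matrix
open scoped Matrix

theorem gpdf_hasDeriv (x : ℝ) :
    HasDerivAt (gaussianPDFReal 0 1) (-(x * gaussianPDFReal 0 1 x)) x := by
  have h : gaussianPDFReal 0 1 = fun x : ℝ => (Real.sqrt (2 * Real.pi))⁻¹ * Real.exp (-(x^2)/2) := by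
    ext x; simp [gaussianPDFReal]
  rw [h]
  have h1 : HasDerivAt (fun x : ℝ => -(x^2)/2) (-x) x := by
    have := ((hasDerivAt_pow 2 x).neg).div_const 2
    refine this.congr_deriv ?_
    norm_num; ring
  have := (h1.exp).const_mul ((Real.sqrt (2 * Real.pi))⁻¹)
  refine this.congr_deriv ?_
  ring

theorem integrable_id_gauss : Integrable (fun x : ℝ => x) (gaussianReal 0 1) :=
  (memLp_id_gaussianReal (μ := 0) (v := 1) 1).integrable le_rfl

theorem integrable_gauss_iff (f : ℝ → ℝ) : Integrable f (gaussianReal 0 1) ↔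
    Integrable (fun x => f x * gaussianPDFReal 0 1 x) := by
  rw [gaussianReal_of_var_ne_zero 0 one_ne_zero,
    integrable_withDensity_iff (measurable_gaussianPDF 0 1)
      (Filter.Eventually.of_forall fun x => gaussianPDF_lt_top)]
  simp [toReal_gaussianPDF]

theorem stein1 (u u' : ℝ → ℝ) (hu : ∀ x, HasDerivAt u (u' x) x) (hu' : Continuous u') (C : ℝ)
    (h1 : ∀ x, |u x| ≤ C) (h2 : ∀ x, |u' x| ≤ C) :
    ∫ x, x * u x ∂(gaussianReal 0 1) = ∫ x, u' x ∂(gaussianReal 0 1) := by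
  have hc : Continuous u := continuous_iff_continuousAt.2 fun x => (hu x).continuousAt
  have i1 : Integrable u (gaussianReal 0 1) :=
    Integrable.of_bound hc.aestronglyMeasurable C (Filter.Eventually.of_forall h1)
  have i2 : Integrable u' (gaussianReal 0 1) :=
    Integrable.of_bound hu'.aestronglyMeasurable C (Filter.Eventually.of_forall h2)
  have i3 : Integrable (fun x => x * u x) (gaussianReal 0 1) :=
    integrable_id_gauss.mul_bdd (c := C) hc.aestronglyMeasurable (Filter.Eventually.of_forall h1)
  rw [integrable_gauss_iff] at i1 i2 i3
  have := integral_mul_deriv_eq_deriv_mul_of_integrable (u := u) (v := gaussianPDFReal 0 1)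
    (u' := u') (v' := fun x => -(x * gaussianPDFReal 0 1 x)) (fun x _ => hu x) (fun x _ => gpdf_hasDeriv x)
    (by
      refine i3.neg.congr (Filter.Eventually.of_forall fun x => ?_)
      simp; ring) i2 i1
  rw [integral_gaussianReal_eq_integral_smul one_ne_zero,
    integral_gaussianReal_eq_integral_smul one_ne_zero]
  simp only [smul_eq_mul]
  have e1 : ∫ x, gaussianPDFReal 0 1 x * (x * u x) = - ∫ x, u x * -(x * gaussianPDFReal 0 1 x) := by
    rw [← integral_neg]; congr 1; ext x; ring
  rw [e1, this, neg_neg]; congr 1; ext x; ring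

/-- Standard Gaussian measure on `Fin d → ℝ`. -/
noncomputable abbrev gam (d : ℕ) : Measure (Fin d → ℝ) := Measure.pi fun _ : Fin d => gaussianReal 0 1

theorem memLp_coord {d : ℕ} (k : Fin d) (p : ENNReal) (hp : p ≠ ⊤) :
    MemLp (fun y : Fin d → ℝ => y k) p (gam d) := by
  have := (memLp_id_gaussianReal' (μ := 0) (v := 1) p hp).comp_measurePreserving
    (measurePreserving_eval (fun _ : Fin d => gaussianReal 0 1) k)
  exact this

theorem stein_pi {d : ℕ} (k : Fin d) (H : (Fin d → ℝ) → ℝ) (hH : ContDiff ℝ 1 H) (C : ℝ)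
    (h1 : ∀ y, |H y| ≤ C) (h2 : ∀ y, |fderiv ℝ H y (Pi.single k 1)| ≤ C) :
    ∫ y, y k * H y ∂(gam d) = ∫ y, fderiv ℝ H y (Pi.single k 1) ∂(gam d) := by
  rcases d with _ | m
  · exact k.elim0
  have hc := hH.continuous
  have hc' : Continuous fun y => fderiv ℝ H y (Pi.single k 1) :=
    (hH.continuous_fderiv one_ne_zero).clm_apply continuous_const
  have i1 : Integrable (fun y => y k * H y) (gam (m+1)) :=
    ((memLp_coord k 1 (by simp)).integrable le_rfl).mul_bdd (c := C) hc.aestronglyMeasurable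
      (Filter.Eventually.of_forall h1)
  have i2 : Integrable (fun y => fderiv ℝ H y (Pi.single k 1)) (gam (m+1)) :=
    Integrable.of_bound hc'.aestronglyMeasurable C (Filter.Eventually.of_forall h2)
  have mp := (measurePreserving_piFinSuccAbove (fun _ : Fin (m+1) => gaussianReal 0 1) k).symm
  rw [← mp.integral_comp', ← mp.integral_comp']
  have j1 := mp.integrable_comp_emb (MeasurableEquiv.measurableEmbedding _) |>.2 i1
  have j2 := mp.integrable_comp_emb (MeasurableEquiv.measurableEmbedding _) |>.2 i2
  simp only [Function.comp_def] at j1 j2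
  rw [integral_prod_symm _ j1, integral_prod_symm _ j2]
  congr 1
  ext z
  have key : ∀ x : ℝ, (MeasurableEquiv.piFinSuccAbove (fun _ : Fin (m+1) => ℝ) k).symm (x, z)
      = k.insertNth x z := fun x => rfl
  simp only [key, Fin.insertNth_apply_same]
  refine stein1 (fun x => H (k.insertNth x z)) _ (fun x => ?_) ?_ C (fun x => h1 _) (fun x => h2 _)
  · have e : ∀ x : ℝ, (k.insertNth x z : Fin (m+1) → ℝ) = k.insertNth 0 z + x • Pi.single k 1 := by
      intro x; ext i
      refine Fin.succAboveCases k ?_ (fun i => ?_) i <;> simp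
    have hd : HasDerivAt (fun x : ℝ => (k.insertNth x z : Fin (m+1) → ℝ)) (Pi.single k 1) x := by
      have h3 : HasDerivAt (fun x : ℝ => (k.insertNth 0 z : Fin (m+1) → ℝ) + x • (Pi.single k 1 : Fin (m+1) → ℝ)) (Pi.single k 1) x := by
        simpa using ((hasDerivAt_id x).smul_const (Pi.single k 1 : Fin (m+1) → ℝ)).const_add (k.insertNth 0 z : Fin (m+1) → ℝ)
      refine h3.congr_of_eventuallyEq (Filter.Eventually.of_forall fun x => e x)
    exact ((hH.differentiable one_ne_zero).differentiableAt.hasFDerivAt).comp_hasDerivAt x hd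
  · refine hc'.comp ?_
    exact Continuous.finInsertNth k continuous_id continuous_const

theorem gam_cov {d : ℕ} (k l : Fin d) : ∫ y, y k * y l ∂(gam d) = if k = l then 1 else 0 := by
  have hm : ∀ k : Fin d, ∫ y, y k ∂(gam d) = 0 := fun k => by
    have := (measurePreserving_eval (fun _ : Fin d => gaussianReal 0 1) k).map_eq
    have h2 : ∫ x, x ∂(gaussianReal 0 1) = 0 := integral_id_gaussianReal
    rw [← this, integral_map (measurable_pi_apply k).aemeasurable (by fun_prop)] at h2
    exact h2
  split_ifs with h
  · subst h
    have h2 : ∫ x, x * x ∂(gaussianReal 0 1) = 1 := by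
      have := variance_fun_id_gaussianReal (μ := 0) (v := 1)
      rw [variance_of_integral_eq_zero (by fun_prop) integral_id_gaussianReal] at this
      simpa [sq] using this
    have := (measurePreserving_eval (fun _ : Fin d => gaussianReal 0 1) k).map_eq
    rw [← this, integral_map (measurable_pi_apply k).aemeasurable (by fun_prop)] at h2
    exact h2
  · have hi := (iIndepFun_pi (μ := fun _ : Fin d => gaussianReal 0 1) (X := fun _ x => x) (by fun_prop)).indepFun h
    have := hi.integral_fun_mul_eq_mul_integral (memLp_coord k 1 (by simp)).1 (memLp_coord l 1 (by simp)).1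
    rw [this, hm, zero_mul]

open MeasureTheory ProbabilityTheory Matrix
open scoped Matrix

theorem sq_integral_le' {α : Type*} [MeasurableSpace α] (μ : Measure α) [IsProbabilityMeasure μ]
    (g : α → ℝ) (h1 : Integrable g μ) (h2 : Integrable (fun x => g x ^ 2) μ) :
    (∫ x, g x ∂μ) ^ 2 ≤ ∫ x, g x ^ 2 ∂μ := by
  set m := ∫ x, g x ∂μ with hm
  have h0 : 0 ≤ ∫ x, (g x ^ 2 - 2 * m * g x + m ^ 2) ∂μ :=
    integral_nonneg fun x => by
      have : 0 ≤ (g x - m) ^ 2 := sq_nonneg _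
      simp only [Pi.zero_apply]; linarith [this, sub_sq (g x) m]
  have i1 : Integrable (fun x => g x ^ 2 - 2 * m * g x) μ := h2.sub (h1.const_mul _)
  rw [integral_add i1 (integrable_const _), integral_sub h2 (h1.const_mul _), integral_const_mul] at h0
  simp [← hm] at h0
  nlinarith

theorem lip_fderiv {d : ℕ} (h : (Fin d → ℝ) → ℝ) (x v : Fin d → ℝ) (hd : DifferentiableAt ℝ h x)
    (hL : ∀ x y : Fin d → ℝ, |h x - h y| ≤ Real.sqrt (∑ i, (x i - y i) ^ 2)) :
    |fderiv ℝ h x v| ≤ Real.sqrt (∑ i, v i ^ 2) := by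
  have h1 : HasDerivAt (fun t : ℝ => h (x + t • v)) (fderiv ℝ h x v) 0 := by
    have := hd.hasFDerivAt.hasLineDerivAt v
    exact this
  have h2 := h1.tendsto_slope.abs
  refine le_of_tendsto h2 ?_
  filter_upwards [self_mem_nhdsWithin] with t ht
  have ht : t ≠ 0 := ht
  rw [slope_def_field]
  simp only [sub_zero, zero_smul, add_zero]
  rw [abs_div, div_le_iff₀ (abs_pos.2 ht)]
  refine (hL _ _).trans_eq ?_
  have : ∑ i, ((x + t • v) i - x i) ^ 2 = t ^ 2 * ∑ i, v i ^ 2 := by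
    rw [Finset.mul_sum]; congr 1; ext i; simp; ring
  rw [this, Real.sqrt_mul (sq_nonneg _), Real.sqrt_sq_eq_abs, mul_comm]

theorem clm_expand {d : ℕ} (A : (Fin d → ℝ) →L[ℝ] ℝ) (v : Fin d → ℝ) :
    A v = ∑ j, A (Pi.single j 1) * v j := by
  conv_lhs => rw [pi_eq_sum_univ' v]
  rw [map_sum]
  congr 1; ext j
  rw [map_smul, smul_eq_mul, mul_comm]

section stein
variable {Ω : Type*} [MeasurableSpace Ω] (P : Measure Ω) [IsProbabilityMeasure P] {d : ℕ}

theorem int_bdd (a : Ω × (Fin d → ℝ) → ℝ) (ha : Measurable a) (C : ℝ) (hC : ∀ p, |a p| ≤ C) :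
    Integrable a (P.prod (gam d)) :=
  Integrable.of_bound ha.aestronglyMeasurable C (Filter.Eventually.of_forall hC)

theorem int_coord (k : Fin d) : Integrable (fun p : Ω × (Fin d → ℝ) => p.2 k) (P.prod (gam d)) := by
  have := ((memLp_coord k 1 (by simp)).integrable le_rfl).comp_snd P
  exact this

theorem int_bdd_mul (a : Ω × (Fin d → ℝ) → ℝ) (ha : Measurable a) (C : ℝ) (hC : ∀ p, |a p| ≤ C)
    (k : Fin d) : Integrable (fun p => a p * p.2 k) (P.prod (gam d)) :=
  (int_coord P k).bdd_mul (c := C) ha.aestronglyMeasurable (Filter.Eventually.of_forall hC)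

theorem int_sq (a : Ω → ℝ) (ha : Measurable a) (C : ℝ) (hC : ∀ p, |a p| ≤ C)
    (k l : Fin d) : Integrable (fun p => a p.1 * (p.2 k * p.2 l)) (P.prod (gam d)) := by
  have h1 : Integrable a P := Integrable.of_bound ha.aestronglyMeasurable C (Filter.Eventually.of_forall hC)
  have h2 : Integrable (fun y : Fin d → ℝ => y k * y l) (gam d) :=
    (memLp_coord k 2 (by simp)).integrable_mul (memLp_coord l 2 (by simp))
  exact h1.mul_prod h2

/-- interpolation point -/
noncomputable def ipt (W : Ω → Fin d → ℝ) (t : ℝ) (p : Ω × (Fin d → ℝ)) : Fin d → ℝ :=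
  Real.sin t • W p.1 + Real.cos t • p.2

theorem ipt_meas (W : Ω → Fin d → ℝ) (hW : Measurable W) (t : ℝ) : Measurable (ipt W t) := by
  unfold ipt
  fun_prop

theorem phi_deriv (W : Ω → Fin d → ℝ) (hW : Measurable W) (R : ℝ) (hWb : ∀ ω j, |W ω j| ≤ R)
    (h : (Fin d → ℝ) → ℝ) (hh : ContDiff ℝ 1 h) (C : ℝ) (hC0 : ∀ x, |h x| ≤ C)
    (hC : ∀ j x, |fderiv ℝ h x (Pi.single j 1)| ≤ C) (t : ℝ) :
    HasDerivAt (fun t => ∫ p, h (ipt W t p) ∂(P.prod (gam d)))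
      (∫ p, ∑ j, fderiv ℝ h (ipt W t p) (Pi.single j 1) *
        (Real.cos t * W p.1 j - Real.sin t * p.2 j) ∂(P.prod (gam d))) t := by
  have hc' : ∀ j, Continuous fun y => fderiv ℝ h y (Pi.single j 1) := fun j =>
    (hh.continuous_fderiv one_ne_zero).clm_apply continuous_const
  refine (hasDerivAt_integral_of_dominated_loc_of_deriv_le (s := Set.univ) (Filter.univ_mem)
    (F := fun t p => h (ipt W t p))
    (F' := fun t p => ∑ j, fderiv ℝ h (ipt W t p) (Pi.single j 1) *
        (Real.cos t * W p.1 j - Real.sin t * p.2 j))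
    (bound := fun p => ∑ j, C * (R + |p.2 j|)) ?_ ?_ ?_ ?_ ?_ ?_).2
  · exact Filter.Eventually.of_forall fun t =>
      (hh.continuous.measurable.comp (ipt_meas W hW t)).aestronglyMeasurable
  · exact int_bdd P _ (hh.continuous.measurable.comp (ipt_meas W hW t)) C fun p => hC0 _
  · refine Measurable.aestronglyMeasurable ?_
    refine Finset.measurable_sum _ fun j _ => ?_
    refine ((hc' j).measurable.comp (ipt_meas W hW t)).mul ?_
    fun_prop
  · refine Filter.Eventually.of_forall fun p t _ => ?_
    rw [Real.norm_eq_abs]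
    refine (Finset.abs_sum_le_sum_abs _ _).trans (Finset.sum_le_sum fun j _ => ?_)
    rw [abs_mul]
    have hCn : 0 ≤ C := (abs_nonneg _).trans (hC0 0)
    refine mul_le_mul (hC j _) ?_ (abs_nonneg _) hCn
    refine (abs_sub _ _).trans (add_le_add ?_ ?_)
    · rw [abs_mul]
      exact (mul_le_of_le_one_left (abs_nonneg _) (Real.abs_cos_le_one t)).trans (hWb _ _)
    · rw [abs_mul]
      exact (mul_le_of_le_one_left (abs_nonneg _) (Real.abs_sin_le_one t))
  · refine integrable_finsetSum _ fun j _ => ?_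
    exact ((integrable_const R).add (int_coord P j).abs).const_mul C
  · refine Filter.Eventually.of_forall fun p t _ => ?_
    have h1 : HasDerivAt (fun t => ipt W t p) (Real.cos t • W p.1 - Real.sin t • p.2) t := by
      have := ((Real.hasDerivAt_sin t).smul_const (W p.1)).add ((Real.hasDerivAt_cos t).smul_const (p.2))
      refine this.congr_deriv ?_
      rw [neg_smul, sub_eq_add_neg]
    have h2 := ((hh.differentiable one_ne_zero).differentiableAt.hasFDerivAt).comp_hasDerivAt t h1
    refine h2.congr_deriv ?_
    rw [clm_expand]
    rfl

theorem fderiv_affine (F : (Fin d → ℝ) → ℝ) (hF : ContDiff ℝ 1 F) (a : ℝ) (b x v : Fin d → ℝ) :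
    fderiv ℝ (fun x => F (a • x + b)) x v = a * fderiv ℝ F (a • x + b) v := by
  have h1 : HasFDerivAt (fun x : Fin d → ℝ => a • x + b) (a • ContinuousLinearMap.id ℝ (Fin d → ℝ)) x :=
    ((hasFDerivAt_id x).const_smul a).add_const b
  have h2 := ((hF.differentiable one_ne_zero).differentiableAt.hasFDerivAt (x := a • x + b)).comp x h1
  have h3 := h2.fderiv
  rw [show (fun x => F (a • x + b)) = F ∘ (fun x : Fin d → ℝ => a • x + b) from rfl, h3]
  simp

theorem stepB1 (W : Ω → Fin d → ℝ) (hW : Measurable W) (T : Fin d → Fin d → Ω → ℝ)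
    (hT : ∀ j k, Measurable (T j k)) (R : ℝ) (hWb : ∀ ω j, |W ω j| ≤ R)
    (hTb : ∀ j k ω, |T j k ω| ≤ R)
    (ibp : ∀ j (F : (Fin d → ℝ) → ℝ), ContDiff ℝ 1 F → ∫ ω, W ω j * F (W ω) ∂P =
      ∫ ω, ∑ k, T j k ω * fderiv ℝ F (W ω) (Pi.single k 1) ∂P)
    (F : (Fin d → ℝ) → ℝ) (hF : ContDiff ℝ 1 F) (C : ℝ) (hC0 : ∀ x, |F x| ≤ C)
    (hC : ∀ j x, |fderiv ℝ F x (Pi.single j 1)| ≤ C) (t : ℝ) (j : Fin d) :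
    ∫ p, W p.1 j * F (ipt W t p) ∂(P.prod (gam d)) =
      Real.sin t * ∑ k, ∫ p, T j k p.1 * fderiv ℝ F (ipt W t p) (Pi.single k 1) ∂(P.prod (gam d)) := by
  have hc' : ∀ j, Continuous fun y => fderiv ℝ F y (Pi.single j 1) := fun j =>
    (hF.continuous_fderiv one_ne_zero).clm_apply continuous_const
  have i1 : Integrable (fun p => W p.1 j * F (ipt W t p)) (P.prod (gam d)) := by
    refine int_bdd P _ (Measurable.mul (by fun_prop) (hF.continuous.measurable.comp (ipt_meas W hW t)))
      (R * C) fun p => ?_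
    rw [abs_mul]
    exact mul_le_mul (hWb _ _) (hC0 _) (abs_nonneg _) ((abs_nonneg _).trans (hWb p.1 j))
  have i2 : ∀ k, Integrable (fun p => T j k p.1 * fderiv ℝ F (ipt W t p) (Pi.single k 1))
      (P.prod (gam d)) := by
    intro k
    refine int_bdd P _ (((hT j k).comp measurable_fst).mul
      ((hc' k).measurable.comp (ipt_meas W hW t))) (R * C) fun p => ?_
    rw [abs_mul]
    exact mul_le_mul (hTb _ _ _) (hC _ _) (abs_nonneg _) ((abs_nonneg _).trans (hWb p.1 j))
  rw [← integral_finsetSum _ (fun k _ => i2 k), ← integral_const_mul, integral_prod_symm _ i1,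
    integral_prod_symm _ ((integrable_finsetSum _ (fun k _ => i2 k)).const_mul _)]
  congr 1; ext y
  have := ibp j (fun x => F (Real.sin t • x + Real.cos t • y))
    (hF.comp (by fun_prop))
  simp only [fderiv_affine F hF] at this
  refine this.trans ?_
  congr 1; ext ω
  rw [Finset.mul_sum]
  refine Finset.sum_congr rfl fun k _ => ?_
  simp only [ipt]; ring

theorem stepB2 (W : Ω → Fin d → ℝ) (hW : Measurable W) (a : Ω → ℝ)
    (ha : Measurable a) (R : ℝ) (hab : ∀ ω, |a ω| ≤ R)
    (F : (Fin d → ℝ) → ℝ) (hF : ContDiff ℝ 1 F) (C : ℝ) (hC0 : ∀ x, |F x| ≤ C)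
    (hC : ∀ j x, |fderiv ℝ F x (Pi.single j 1)| ≤ C) (t : ℝ) (k : Fin d) :
    ∫ p, (a p.1 * F (ipt W t p)) * p.2 k ∂(P.prod (gam d)) =
      Real.cos t * ∫ p, a p.1 * fderiv ℝ F (ipt W t p) (Pi.single k 1) ∂(P.prod (gam d)) := by
  have hc' : ∀ j, Continuous fun y => fderiv ℝ F y (Pi.single j 1) := fun j =>
    (hF.continuous_fderiv one_ne_zero).clm_apply continuous_const
  have i1 : Integrable (fun p => (a p.1 * F (ipt W t p)) * p.2 k) (P.prod (gam d)) := by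
    refine int_bdd_mul P (fun p => a p.1 * F (ipt W t p)) (Measurable.mul (by fun_prop) (hF.continuous.measurable.comp (ipt_meas W hW t)))
      (R * C) (fun p => ?_) k
    rw [abs_mul]
    exact mul_le_mul (hab _) (hC0 _) (abs_nonneg _) ((abs_nonneg _).trans (hab p.1))
  have i2 : Integrable (fun p => a p.1 * fderiv ℝ F (ipt W t p) (Pi.single k 1))
      (P.prod (gam d)) := by
    refine int_bdd P _ ((ha.comp measurable_fst).mul
      ((hc' k).measurable.comp (ipt_meas W hW t))) (R * C) fun p => ?_
    rw [abs_mul]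
    exact mul_le_mul (hab _) (hC _ _) (abs_nonneg _) ((abs_nonneg _).trans (hab p.1))
  rw [← integral_const_mul, integral_prod _ i1, integral_prod _ (i2.const_mul _)]
  congr 1; ext ω
  have e := fun y : Fin d → ℝ => add_comm (Real.cos t • y) (Real.sin t • W ω)
  have hb1 : ∀ y, |fderiv ℝ (fun x => F (Real.cos t • x + Real.sin t • W ω)) y (Pi.single k 1)| ≤ C := by
    intro y
    rw [fderiv_affine F hF, abs_mul]
    exact (mul_le_of_le_one_left (abs_nonneg _) (Real.abs_cos_le_one t)).trans (hC _ _)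
  have := stein_pi k (fun x => F (Real.cos t • x + Real.sin t • W ω))
    (hF.comp (by fun_prop)) C (fun y => hC0 _) hb1
  simp only [fderiv_affine F hF] at this
  simp only [e] at this
  rw [integral_const_mul] at this ⊢
  simp only [ipt]
  rw [integral_const_mul, mul_left_comm, ← this, ← integral_const_mul]
  congr 1; ext y; ring

theorem stepC (M : Fin d → Fin d → Ω → ℝ) (hM : ∀ j k, Measurable (M j k)) (R : ℝ)
    (hMb : ∀ j k ω, |M j k ω| ≤ R) (D : Fin d → Ω × (Fin d → ℝ) → ℝ) (hD : ∀ j, Measurable (D j))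
    (hDb : ∀ p (v : Fin d → ℝ), |∑ j, D j p * v j| ≤ Real.sqrt (∑ j, v j ^ 2)) (K : ℝ) (hK0 : 0 ≤ K)
    (hK : ∑ j, ∑ k, ∫ ω, M j k ω ^ 2 ∂P ≤ K ^ 2) :
    |∫ p, ∑ j, D j p * ∑ k, M j k p.1 * p.2 k ∂(P.prod (gam d))| ≤ K := by
  set g : Ω × (Fin d → ℝ) → ℝ := fun p => ∑ j, D j p * ∑ k, M j k p.1 * p.2 k with hg
  have hMM : ∀ j k l, Integrable (fun p : Ω × (Fin d → ℝ) => (M j k p.1 * M j l p.1) * (p.2 k * p.2 l))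
      (P.prod (gam d)) := by
    intro j k l
    refine int_sq P (fun ω => M j k ω * M j l ω) ((hM j k).mul (hM j l)) (R * R) (fun ω => ?_) k l
    rw [abs_mul]
    exact mul_le_mul (hMb _ _ _) (hMb _ _ _) (abs_nonneg _) ((abs_nonneg _).trans (hMb j k ω))
  have hN : ∀ p : Ω × (Fin d → ℝ), ∑ j, (∑ k, M j k p.1 * p.2 k) ^ 2 =
      ∑ j, ∑ k, ∑ l, (M j k p.1 * M j l p.1) * (p.2 k * p.2 l) := by
    intro p
    refine Finset.sum_congr rfl fun j _ => ?_
    rw [sq, Finset.sum_mul_sum]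
    refine Finset.sum_congr rfl fun k _ => Finset.sum_congr rfl fun l _ => by ring
  have iN : Integrable (fun p : Ω × (Fin d → ℝ) => ∑ j, (∑ k, M j k p.1 * p.2 k) ^ 2)
      (P.prod (gam d)) := by
    simp only [hN]
    exact integrable_finsetSum _ fun j _ => integrable_finsetSum _ fun k _ =>
      integrable_finsetSum _ fun l _ => hMM j k l
  have mg : Measurable g := by
    refine Finset.measurable_sum _ fun j _ => (hD j).mul ?_
    refine Finset.measurable_sum _ fun k _ => ((hM j k).comp measurable_fst).mul ?_
    fun_prop
  have hle : ∀ p, g p ^ 2 ≤ ∑ j, (∑ k, M j k p.1 * p.2 k) ^ 2 := by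
    intro p
    have := hDb p (fun j => ∑ k, M j k p.1 * p.2 k)
    rw [← sq_abs]
    exact (pow_le_pow_left₀ (abs_nonneg _) this 2).trans_eq
      (Real.sq_sqrt (Finset.sum_nonneg fun _ _ => sq_nonneg _))
  have ig2 : Integrable (fun p => g p ^ 2) (P.prod (gam d)) := by
    refine iN.mono' (mg.pow_const 2).aestronglyMeasurable (Filter.Eventually.of_forall fun p => ?_)
    rw [Real.norm_eq_abs, abs_of_nonneg (sq_nonneg _)]
    exact hle p
  have ig : Integrable g (P.prod (gam d)) := by
    refine (ig2.add (integrable_const 1)).mono' mg.aestronglyMeasurable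
      (Filter.Eventually.of_forall fun p => ?_)
    rw [Real.norm_eq_abs]
    simp only [Pi.add_apply]
    rw [← sq_abs]
    nlinarith [sq_nonneg (|g p| - 1), abs_nonneg (g p)]
  refine abs_le_of_sq_le_sq ?_ hK0
  refine (sq_integral_le' _ g ig ig2).trans (le_trans ?_ hK)
  refine (integral_mono ig2 iN hle).trans_eq ?_
  simp only [hN]
  rw [integral_finsetSum _ (fun j _ => integrable_finsetSum _ fun k _ =>
      integrable_finsetSum _ fun l _ => hMM j k l)]
  refine Finset.sum_congr rfl fun j _ => ?_
  rw [integral_finsetSum _ (fun k _ => integrable_finsetSum _ fun l _ => hMM j k l)]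
  refine Finset.sum_congr rfl fun k _ => ?_
  rw [integral_finsetSum _ (fun l _ => hMM j k l)]
  have : ∀ l, ∫ p : Ω × (Fin d → ℝ), (M j k p.1 * M j l p.1) * (p.2 k * p.2 l) ∂(P.prod (gam d)) =
      if k = l then ∫ ω, M j k ω ^ 2 ∂P else 0 := by
    intro l
    have := integral_prod_mul (μ := P) (ν := gam d) (fun ω => M j k ω * M j l ω) (fun y => y k * y l)
    rw [this, gam_cov]
    split_ifs with h
    · subst h; simp [sq]
    · simp
  simp [this]

theorem stein_main (W : Ω → Fin d → ℝ) (hW : Measurable W) (T : Fin d → Fin d → Ω → ℝ)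
    (hT : ∀ j k, Measurable (T j k)) (R : ℝ) (hWb : ∀ ω j, |W ω j| ≤ R)
    (hTb : ∀ j k ω, |T j k ω| ≤ R)
    (ibp : ∀ j (F : (Fin d → ℝ) → ℝ), ContDiff ℝ 1 F → ∫ ω, W ω j * F (W ω) ∂P =
      ∫ ω, ∑ k, T j k ω * fderiv ℝ F (W ω) (Pi.single k 1) ∂P) (K : ℝ) (hK0 : 0 ≤ K)
    (hK : ∑ j, ∑ k, ∫ ω, (T j k ω - if j = k then 1 else 0) ^ 2 ∂P ≤ K ^ 2)
    (h : (Fin d → ℝ) → ℝ) (hh : ContDiff ℝ 2 h) (hcs : HasCompactSupport h)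
    (hL : ∀ x y : Fin d → ℝ, |h x - h y| ≤ Real.sqrt (∑ i, (x i - y i) ^ 2)) :
    |∫ ω, h (W ω) ∂P - ∫ y, h y ∂(gam d)| ≤ K := by
  set D : Fin d → (Fin d → ℝ) → ℝ := fun j x => fderiv ℝ h x (Pi.single j 1) with hDdef
  have hh1 : ContDiff ℝ 1 h := hh.of_le (by norm_num)
  have hD1 : ∀ j, ContDiff ℝ 1 (D j) := fun j =>
    (hh.fderiv_right (m := 1) (by norm_num)).clm_apply contDiff_const
  have hDs : ∀ j, HasCompactSupport (D j) := fun j => hcs.fderiv_apply (𝕜 := ℝ) _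
  have hb : ∀ (F : (Fin d → ℝ) → ℝ), ContDiff ℝ 1 F → HasCompactSupport F →
      ∃ C, (∀ x, |F x| ≤ C) ∧ ∀ j x, |fderiv ℝ F x (Pi.single j 1)| ≤ C := by
    intro F hF hFs
    obtain ⟨C0, h0⟩ := hFs.exists_bound_of_continuous hF.continuous
    have := fun j => (hFs.fderiv_apply (𝕜 := ℝ) (Pi.single j 1)).exists_bound_of_continuous
      ((hF.continuous_fderiv one_ne_zero).clm_apply continuous_const)
    choose C1 h1 using this
    refine ⟨max C0 (∑ j, |C1 j|), fun x => (h0 x).trans (le_max_left _ _), fun j x => ?_⟩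
    refine ((h1 j x).trans (le_abs_self _)).trans (le_trans ?_ (le_max_right _ _))
    exact Finset.single_le_sum (f := fun j => |C1 j|) (fun i _ => abs_nonneg _) (Finset.mem_univ j)
  obtain ⟨C, hC0, hC⟩ := hb h hh1 hcs
  have := fun j => hb (D j) (hD1 j) (hDs j)
  choose CD hCD0 hCD using this
  set φ : ℝ → ℝ := fun t => ∫ p, h (ipt W t p) ∂(P.prod (gam d)) with hφ
  have hφd : ∀ t, HasDerivAt φ (Real.sin t * ∫ p, ∑ j, D j (ipt W t p) *
      ∑ k, (T j k p.1 - if j = k then 1 else 0) * p.2 k ∂(P.prod (gam d))) t := by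
    intro t
    refine (phi_deriv P W hW R hWb h hh1 C hC0 hC t).congr_deriv ?_
    have mD : ∀ j, Measurable fun p => D j (ipt W t p) := fun j =>
      (hD1 j).continuous.measurable.comp (ipt_meas W hW t)
    have i1 : ∀ j, Integrable (fun p => W p.1 j * D j (ipt W t p)) (P.prod (gam d)) := by
      intro j
      refine int_bdd P _ (Measurable.mul (by fun_prop) (mD j)) (R * CD j) fun p => ?_
      rw [abs_mul]
      exact mul_le_mul (hWb _ _) (hCD0 _ _) (abs_nonneg _) ((abs_nonneg _).trans (hWb p.1 j))
    have i2 : ∀ j, Integrable (fun p => D j (ipt W t p) * p.2 j) (P.prod (gam d)) := by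
      intro j
      exact int_bdd_mul P _ (mD j) (CD j) (fun p => hCD0 _ _) j
    have i3 : ∀ j k, Integrable (fun p => (T j k p.1 * D j (ipt W t p)) * p.2 k) (P.prod (gam d)) := by
      intro j k
      refine int_bdd_mul P (fun p => T j k p.1 * D j (ipt W t p)) (((hT j k).comp measurable_fst).mul (mD j)) (R * CD j) (fun p => ?_) k
      rw [abs_mul]
      exact mul_le_mul (hTb _ _ _) (hCD0 _ _) (abs_nonneg _) ((abs_nonneg _).trans (hWb p.1 j))
    have e1 : ∀ p : Ω × (Fin d → ℝ), ∑ j, fderiv ℝ h (ipt W t p) (Pi.single j 1) *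
        (Real.cos t * W p.1 j - Real.sin t * p.2 j) =
        ∑ j, (Real.cos t * (W p.1 j * D j (ipt W t p)) - Real.sin t * (D j (ipt W t p) * p.2 j)) := by
      intro p
      refine Finset.sum_congr rfl fun j _ => ?_
      simp only [hDdef]; ring
    have e2 : ∀ p : Ω × (Fin d → ℝ), ∑ j, D j (ipt W t p) *
      ∑ k, (T j k p.1 - if j = k then 1 else 0) * p.2 k =
        ∑ j, ((∑ k, (T j k p.1 * D j (ipt W t p)) * p.2 k) - D j (ipt W t p) * p.2 j) := by
      intro p
      refine Finset.sum_congr rfl fun j _ => ?_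
      simp only [sub_mul, Finset.sum_sub_distrib, ite_mul, one_mul, zero_mul, Finset.sum_ite_eq,
        Finset.mem_univ, if_true, mul_sub, Finset.mul_sum]
      congr 1
      exact Finset.sum_congr rfl fun k _ => by ring
    simp only [e1, e2]
    have i4 : ∀ j, Integrable (fun p => Real.cos t * (W p.1 j * D j (ipt W t p)) -
        Real.sin t * (D j (ipt W t p) * p.2 j)) (P.prod (gam d)) := fun j =>
      ((i1 j).const_mul _).sub ((i2 j).const_mul _)
    have i5 : ∀ j, Integrable (fun p => (∑ k, (T j k p.1 * D j (ipt W t p)) * p.2 k) -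
        D j (ipt W t p) * p.2 j) (P.prod (gam d)) := fun j =>
      (integrable_finsetSum _ (fun k _ => i3 j k)).sub (i2 j)
    rw [integral_finsetSum _ (fun j _ => i4 j), integral_finsetSum _ (fun j _ => i5 j),
      Finset.mul_sum]
    refine Finset.sum_congr rfl fun j _ => ?_
    rw [integral_sub ((i1 j).const_mul _) ((i2 j).const_mul _),
      integral_sub (integrable_finsetSum _ (fun k _ => i3 j k)) (i2 j),
      integral_finsetSum _ (fun k _ => i3 j k), integral_const_mul, integral_const_mul,
      stepB1 P W hW T hT R hWb hTb ibp (D j) (hD1 j) (CD j) (hCD0 j) (hCD j) t j, mul_sub]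
    congr 1
    rw [mul_left_comm, Finset.mul_sum]
    congr 1
    refine Finset.sum_congr rfl fun k _ => ?_
    exact (stepB2 P W hW (T j k) (hT j k) R (hTb j k) (D j) (hD1 j) (CD j) (hCD0 j) (hCD j) t k).symm
  have hbd : ∀ t ∈ Set.Ico 0 (Real.pi / 2), ‖(Real.sin t * ∫ p, ∑ j, D j (ipt W t p) *
      ∑ k, (T j k p.1 - if j = k then 1 else 0) * p.2 k ∂(P.prod (gam d)))‖ ≤ K * Real.sin t := by
    intro t ht
    have hs : 0 ≤ Real.sin t := Real.sin_nonneg_of_nonneg_of_le_pi ht.1 (by linarith [ht.2, Real.pi_pos])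
    rw [Real.norm_eq_abs, abs_mul, abs_of_nonneg hs, mul_comm]
    refine mul_le_mul_of_nonneg_right ?_ hs
    refine stepC P (fun j k ω => T j k ω - if j = k then 1 else 0) (fun j k => (hT j k).sub_const _)
      (R + 1) (fun j k ω => ?_) (fun j p => D j (ipt W t p))
      (fun j => (hD1 j).continuous.measurable.comp (ipt_meas W hW t)) (fun p v => ?_) K hK0 hK
    · refine (abs_sub _ _).trans (add_le_add (hTb _ _ _) ?_)
      split_ifs <;> simp
    · have := lip_fderiv h (ipt W t p) v (hh1.differentiable one_ne_zero).differentiableAt hL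
      rwa [clm_expand] at this
  have hB : ∀ t, HasDerivAt (fun t => K * (1 - Real.cos t)) (K * Real.sin t) t := by
    intro t
    have := ((Real.hasDerivAt_cos t).const_sub 1).const_mul K
    simpa using this
  have fin := image_norm_le_of_norm_deriv_right_le_deriv_boundary (f := fun t => φ t - φ 0)
    (a := 0) (b := Real.pi / 2)
    (fun t _ => ((hφd t).continuousAt.sub continuousAt_const).continuousWithinAt)
    (fun t _ => ((hφd t).sub_const (φ 0)).hasDerivWithinAt) (by simp) hB hbd
    (Set.right_mem_Icc.2 (by positivity))
  have p0 : φ 0 = ∫ y, h y ∂(gam d) := by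
    simp only [hφ, ipt]
    simp [integral_fun_snd]
  have p1 : φ (Real.pi / 2) = ∫ ω, h (W ω) ∂P := by
    simp only [hφ, ipt]
    simp [integral_fun_fst (f := fun ω => h (W ω))]
  rw [p0, p1] at fin
  simpa using fin
end stein

open MeasureTheory ProbabilityTheory Matrix
open scoped Matrix

/-- Euclidean length on `Fin d → ℝ`. -/
noncomputable def el {d : ℕ} (x : Fin d → ℝ) : ℝ := Real.sqrt (∑ i, x i ^ 2)

theorem el_eq {d : ℕ} (x : Fin d → ℝ) : el x = ‖WithLp.toLp 2 x‖ := by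
  simp [el, EuclideanSpace.norm_eq]

/-- Euclidean 1-Lipschitz. -/
def ELip {d : ℕ} (f : (Fin d → ℝ) → ℝ) : Prop := ∀ x y, |f x - f y| ≤ el (x - y)

theorem el_lip {d : ℕ} : ELip (el (d := d)) := by
  intro x y
  simp only [el_eq, WithLp.toLp_sub]
  exact abs_norm_sub_norm_le _ _

theorem el_le_sum {d : ℕ} (x : Fin d → ℝ) : el x ≤ ∑ i, |x i| := by
  refine Real.sqrt_le_iff.2 ⟨Finset.sum_nonneg fun _ _ => abs_nonneg _, ?_⟩
  simp only [← sq_abs (x _)]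
  exact Finset.sum_sq_le_sq_sum_of_nonneg fun i _ => abs_nonneg _

theorem el_le_norm {d : ℕ} (x : Fin d → ℝ) : el x ≤ d * ‖x‖ := by
  refine (el_le_sum x).trans ?_
  refine (Finset.sum_le_sum fun i _ => (norm_le_pi_norm x i)).trans ?_
  simp

theorem norm_le_el {d : ℕ} (x : Fin d → ℝ) : ‖x‖ ≤ el x := by
  refine (pi_norm_le_iff_of_nonneg (Real.sqrt_nonneg _)).2 fun i => ?_
  rw [Real.norm_eq_abs, ← Real.sqrt_sq_eq_abs]
  exact Real.sqrt_le_sqrt (Finset.single_le_sum (f := fun i => x i ^ 2) (fun i _ => sq_nonneg _) (Finset.mem_univ i))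

theorem ELip.lipschitz {d : ℕ} {f : (Fin d → ℝ) → ℝ} (hf : ELip f) : LipschitzWith d f := by
  refine LipschitzWith.of_dist_le_mul fun x y => ?_
  rw [Real.dist_eq, dist_eq_norm]
  exact (hf x y).trans (el_le_norm _)

theorem mollify {d : ℕ} (f : (Fin d → ℝ) → ℝ) (hf : ELip f) (hs : HasCompactSupport f)
    (ε : ℝ) (hε : 0 < ε) : ∃ h : (Fin d → ℝ) → ℝ, ContDiff ℝ 2 h ∧ HasCompactSupport h ∧ ELip h ∧
      ∀ x, |h x - f x| ≤ ε := by
  have hc := hf.lipschitz.continuous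
  have hd : (0:ℝ) < d + 1 := by positivity
  let φ : ContDiffBump (0 : Fin d → ℝ) := ⟨ε / (d+1) / 2, ε / (d+1), by positivity,
    by have := div_pos hε hd; linarith⟩
  have hφi : ∀ x : Fin d → ℝ, Integrable (fun t => φ.normed volume t • f (x - t)) := by
    intro x
    refine Continuous.integrable_of_hasCompactSupport ?_ ?_
    · exact φ.continuous_normed.smul (hc.comp (by fun_prop))
    · exact φ.hasCompactSupport_normed.smul_right
  refine ⟨MeasureTheory.convolution (φ.normed volume) f (ContinuousLinearMap.lsmul ℝ ℝ) volume, ?_, ?_, ?_, ?_⟩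
  · exact φ.hasCompactSupport_normed.contDiff_convolution_left _ φ.contDiff_normed hc.locallyIntegrable
  · exact φ.hasCompactSupport_normed.convolution _ hs
  · intro x y
    simp only [MeasureTheory.convolution_def, ContinuousLinearMap.lsmul_apply]
    rw [← integral_sub (hφi x) (hφi y)]
    calc _ ≤ ∫ t, φ.normed volume t * el (x - y) := by
          rw [← Real.norm_eq_abs]
          refine norm_integral_le_of_norm_le (φ.integrable_normed.mul_const _) (Filter.Eventually.of_forall fun t => ?_)
          rw [← smul_sub, norm_smul, Real.norm_of_nonneg (φ.nonneg_normed t)]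
          refine mul_le_mul_of_nonneg_left ?_ (φ.nonneg_normed t)
          refine (hf _ _).trans_eq ?_
          rw [sub_sub_sub_cancel_right]
      _ = el (x - y) := by
          rw [integral_mul_const, φ.integral_normed, one_mul]
  · intro x
    rw [← Real.dist_eq]
    refine φ.dist_normed_convolution_le hc.aestronglyMeasurable fun y hy => ?_
    have := hf.lipschitz.dist_le_mul y x
    refine this.trans ?_
    have h2 : dist y x ≤ ε / (d + 1) := (Metric.mem_ball.1 hy).le
    calc _ ≤ (d : ℝ) * (ε / (d+1)) := by
            simpa using mul_le_mul_of_nonneg_left h2 (Nat.cast_nonneg d)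
      _ = ε * (d / (d+1)) := by ring
      _ ≤ ε * 1 := by
          refine mul_le_mul_of_nonneg_left ?_ hε.le
          rw [div_le_one hd]; linarith
      _ = ε := mul_one ε

/-- truncation -/
noncomputable def trunc {d : ℕ} (f : (Fin d → ℝ) → ℝ) (N : ℕ) (x : Fin d → ℝ) : ℝ :=
  max (min (f x) (max (N - el x) 0)) (-(max (N - el x) 0))

theorem trunc_lip {d : ℕ} (f : (Fin d → ℝ) → ℝ) (hf : ELip f) (N : ℕ) : ELip (trunc f N) := by
  intro x y
  have h0 : 0 ≤ el (x - y) := Real.sqrt_nonneg _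
  have h1 : |max ((N:ℝ) - el x) 0 - max (N - el y) 0| ≤ el (x - y) := by
    refine (abs_max_sub_max_le_max _ _ _ _).trans (max_le ?_ (by simpa using h0))
    rw [sub_sub_sub_cancel_left, abs_sub_comm]
    exact el_lip x y
  refine (abs_max_sub_max_le_max _ _ _ _).trans (max_le ?_ ?_)
  · exact (abs_min_sub_min_le_max _ _ _ _).trans (max_le (hf x y) h1)
  · rw [neg_sub_neg, abs_sub_comm]; exact h1

theorem trunc_supp {d : ℕ} (f : (Fin d → ℝ) → ℝ) (N : ℕ) : HasCompactSupport (trunc f N) := by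
  refine HasCompactSupport.intro (isCompact_closedBall (0 : Fin d → ℝ) N) fun x hx => ?_
  have : (N : ℝ) < el x := by
    have := norm_le_el x
    simp at hx
    linarith
  have h2 : max ((N:ℝ) - el x) 0 = 0 := max_eq_right (by linarith)
  rw [trunc, h2]
  simp

theorem trunc_abs {d : ℕ} (f : (Fin d → ℝ) → ℝ) (N : ℕ) (x : Fin d → ℝ) : |trunc f N x| ≤ |f x| := by
  unfold trunc
  have : 0 ≤ max ((N:ℝ) - el x) 0 := le_max_right _ _
  generalize max ((N:ℝ) - el x) 0 = m at *
  rcases abs_cases (f x) with h | h <;> rcases max_cases (min (f x) m) (-m) with h1 | h1 <;>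
    rcases min_cases (f x) m with h2 | h2 <;> rw [abs_le] <;> constructor <;> linarith

theorem trunc_tendsto {d : ℕ} (f : (Fin d → ℝ) → ℝ) (x : Fin d → ℝ) :
    Filter.Tendsto (fun N => trunc f N x) Filter.atTop (nhds (f x)) := by
  refine tendsto_const_nhds.congr' ?_
  obtain ⟨M, hM⟩ := exists_nat_ge (|f x| + el x)
  filter_upwards [Filter.eventually_ge_atTop M] with N hN
  have h1 : (M : ℝ) ≤ N := by exact_mod_cast hN
  have h2 : |f x| ≤ N - el x := by linarith
  have h3 := abs_le.1 h2
  unfold trunc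
  rw [max_eq_left ((abs_nonneg _).trans h2), min_eq_left h3.2, max_eq_left h3.1]

theorem approx {Ω : Type*} [MeasurableSpace Ω] (P : Measure Ω) [IsProbabilityMeasure P] {d : ℕ}
    (W : Ω → Fin d → ℝ) (hW : Measurable W) (R : ℝ) (hWb : ∀ ω j, |W ω j| ≤ R) (K : ℝ)
    (H : ∀ h : (Fin d → ℝ) → ℝ, ContDiff ℝ 2 h → HasCompactSupport h → ELip h →
      |∫ ω, h (W ω) ∂P - ∫ y, h y ∂(gam d)| ≤ K)
    (f : (Fin d → ℝ) → ℝ) (hf : ELip f) :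
    |∫ ω, f (W ω) ∂P - ∫ y, f y ∂(gam d)| ≤ K := by
  have step1 : ∀ f : (Fin d → ℝ) → ℝ, HasCompactSupport f → ELip f →
      |∫ ω, f (W ω) ∂P - ∫ y, f y ∂(gam d)| ≤ K := by
    intro f hs hf
    refine le_of_forall_pos_le_add fun ε hε => ?_
    obtain ⟨h, h1, h2, h3, h4⟩ := mollify f hf hs (ε / 2) (by positivity)
    have hcf := hf.lipschitz.continuous
    have hch := h3.lipschitz.continuous
    obtain ⟨C1, hC1⟩ := hs.exists_bound_of_continuous hcf
    obtain ⟨C2, hC2⟩ := h2.exists_bound_of_continuous hch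
    have i1 : Integrable (fun ω => f (W ω)) P :=
      Integrable.of_bound (hcf.measurable.comp hW).aestronglyMeasurable C1 (Filter.Eventually.of_forall fun _ => hC1 _)
    have i2 : Integrable (fun ω => h (W ω)) P :=
      Integrable.of_bound (hch.measurable.comp hW).aestronglyMeasurable C2 (Filter.Eventually.of_forall fun _ => hC2 _)
    have i3 : Integrable f (gam d) :=
      Integrable.of_bound hcf.aestronglyMeasurable C1 (Filter.Eventually.of_forall fun _ => hC1 _)
    have i4 : Integrable h (gam d) :=
      Integrable.of_bound hch.aestronglyMeasurable C2 (Filter.Eventually.of_forall fun _ => hC2 _)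
    have b1 : |∫ ω, h (W ω) ∂P - ∫ ω, f (W ω) ∂P| ≤ ε / 2 := by
      rw [← integral_sub i2 i1, ← Real.norm_eq_abs]
      refine (norm_integral_le_of_norm_le_const (C := ε/2) (Filter.Eventually.of_forall fun ω => h4 _)).trans ?_
      simp
    have b2 : |∫ y, h y ∂(gam d) - ∫ y, f y ∂(gam d)| ≤ ε / 2 := by
      rw [← integral_sub i4 i3, ← Real.norm_eq_abs]
      refine (norm_integral_le_of_norm_le_const (C := ε/2) (Filter.Eventually.of_forall fun ω => h4 _)).trans ?_
      simp
    have b3 := H h h1 h2 h3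
    rw [abs_le] at *
    constructor <;> linarith [b1.1, b1.2, b2.1, b2.2, b3.1, b3.2]
  have step2 : ∀ f : (Fin d → ℝ) → ℝ, f 0 = 0 → ELip f →
      Integrable (fun ω => f (W ω)) P ∧ Integrable f (gam d) ∧
      |∫ ω, f (W ω) ∂P - ∫ y, f y ∂(gam d)| ≤ K := by
    intro f h0 hf
    have hcf := hf.lipschitz.continuous
    have hfb : ∀ x, |f x| ≤ ∑ i, |x i| := fun x => by
      have := hf x 0
      rw [h0, sub_zero, sub_zero] at this
      exact this.trans (el_le_sum x)
    have j1 : Integrable (fun ω => ∑ i, |W ω i|) P := by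
      refine integrable_finsetSum _ fun i _ => ?_
      refine Integrable.of_bound (Measurable.aestronglyMeasurable (by fun_prop)) R (Filter.Eventually.of_forall fun ω => ?_)
      simpa using hWb ω i
    have j2 : Integrable (fun y : Fin d → ℝ => ∑ i, |y i|) (gam d) :=
      integrable_finsetSum _ fun i _ => ((memLp_coord i 1 (by simp)).integrable le_rfl).abs
    have ct := fun N => (trunc_lip f hf N).lipschitz.continuous
    have t1 : Filter.Tendsto (fun N => ∫ ω, trunc f N (W ω) ∂P) Filter.atTop (nhds (∫ ω, f (W ω) ∂P)) := by
      refine tendsto_integral_of_dominated_convergence _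
        (fun N => ((ct N).measurable.comp hW).aestronglyMeasurable) j1
        (fun N => Filter.Eventually.of_forall fun ω => (trunc_abs _ _ _).trans (hfb _))
        (Filter.Eventually.of_forall fun ω => trunc_tendsto _ _)
    have t2 : Filter.Tendsto (fun N => ∫ y, trunc f N y ∂(gam d)) Filter.atTop (nhds (∫ y, f y ∂(gam d))) := by
      refine tendsto_integral_of_dominated_convergence _
        (fun N => ((ct N)).aestronglyMeasurable) j2
        (fun N => Filter.Eventually.of_forall fun ω => (trunc_abs _ _ _).trans (hfb _))
        (Filter.Eventually.of_forall fun ω => trunc_tendsto _ _)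
    refine ⟨j1.mono' (hcf.measurable.comp hW).aestronglyMeasurable (Filter.Eventually.of_forall fun ω => hfb _),
      j2.mono' hcf.aestronglyMeasurable (Filter.Eventually.of_forall fun ω => hfb _), ?_⟩
    refine le_of_tendsto (t1.sub t2).abs (Filter.Eventually.of_forall fun N => ?_)
    exact step1 _ (trunc_supp f N) (trunc_lip f hf N)
  obtain ⟨i1, i2, h3⟩ := step2 (fun x => f x - f 0) (by simp) (fun x y => by simpa using hf x y)
  have e1 : ∫ ω, (f (W ω) - f 0) ∂P = ∫ ω, f (W ω) ∂P - f 0 := by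
    have i1' : Integrable (fun ω => f (W ω)) P := by
      exact (i1.add (integrable_const (f 0))).congr (Filter.Eventually.of_forall fun ω => by simp)
    rw [integral_sub i1' (integrable_const _)]; simp
  have e2 : ∫ y, (f y - f 0) ∂(gam d) = ∫ y, f y ∂(gam d) - f 0 := by
    have i1' : Integrable f (gam d) := by
      exact (i2.add (integrable_const (f 0))).congr (Filter.Eventually.of_forall fun ω => by simp)
    rw [integral_sub i1' (integrable_const _)]; simp
  rw [e1, e2] at h3
  simpa using h3

open MeasureTheory ProbabilityTheory Matrix
open scoped Matrix

/-- Quadratic form. -/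
noncomputable def Qf {n : ℕ} (C : Matrix (Fin n) (Fin n) ℂ) (z : Fin n → ℂ) : ℂ := star z ⬝ᵥ C.mulVec z

theorem sph_bdd {n : ℕ} {X : Type*} [NormedAddCommGroup X] (G : (Fin n → ℂ) → X) (hG : Continuous G) :
    ∃ C, ∀ z : Fin n → ℂ, ∑ j, Complex.normSq (z j) = 1 → ‖G z‖ ≤ C := by
  have hc : IsCompact {z : Fin n → ℂ | ∑ j, Complex.normSq (z j) = 1} := by
    refine Metric.isCompact_of_isClosed_isBounded ?_ ?_
    · refine isClosed_eq ?_ continuous_const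
      exact continuous_finsetSum _ fun j _ => Complex.continuous_normSq.comp (continuous_apply j)
    · refine (Metric.isBounded_closedBall (x := (0 : Fin n → ℂ)) (r := 1)).subset fun z hz => ?_
      rw [mem_closedBall_zero_iff, pi_norm_le_iff_of_nonneg zero_le_one]
      intro i
      have h1 : Complex.normSq (z i) ≤ 1 := by
        rw [← show _ = _ from hz]
        exact Finset.single_le_sum (f := fun j => Complex.normSq (z j)) (fun j _ => Complex.normSq_nonneg _) (Finset.mem_univ i)
      rw [Complex.normSq_eq_norm_sq] at h1
      nlinarith [norm_nonneg (z i)]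
  obtain ⟨C, hC⟩ := hc.exists_bound_of_continuousOn hG.continuousOn
  exact ⟨C, fun z hz => hC z hz⟩

theorem dot_self {n : ℕ} (z : Fin n → ℂ) : star z ⬝ᵥ z = ((∑ j, Complex.normSq (z j) : ℝ) : ℂ) := by
  simp [dotProduct, Complex.normSq_eq_conj_mul_self]

theorem sph_unitary {n : ℕ} (V : Matrix (Fin n) (Fin n) ℂ) (hV : V ∈ Matrix.unitaryGroup (Fin n) ℂ)
    (z : Fin n → ℂ) (hz : ∑ j, Complex.normSq (z j) = 1) : ∑ j, Complex.normSq (V.mulVec z j) = 1 := by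
  have h1 := dot_self (V.mulVec z)
  have h2 := dot_self z
  rw [star_mulVec, ← dotProduct_mulVec, mulVec_mulVec] at h1
  rw [show Vᴴ * V = 1 from (Matrix.mem_unitaryGroup_iff'.1 hV), one_mulVec, h2, hz] at h1
  exact_mod_cast h1.symm

theorem exp_unitary {n : ℕ} (A : Matrix (Fin n) (Fin n) ℂ) (hA : Aᴴ = -A) (t : ℝ) :
    NormedSpace.exp (t • A) ∈ Matrix.unitaryGroup (Fin n) ℂ := by
  rw [Matrix.mem_unitaryGroup_iff, star_eq_conjTranspose, ← Matrix.exp_conjTranspose,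
    conjTranspose_smul, hA, star_trivial, smul_neg,
    ← Matrix.exp_add_of_commute _ _ (Commute.refl (t • A)).neg_right, add_neg_cancel, NormedSpace.exp_zero]

section expo
attribute [local instance] Matrix.linftyOpNormedRing Matrix.linftyOpNormedAlgebra

theorem exp_deriv {n : ℕ} (A : Matrix (Fin n) (Fin n) ℂ) (z : Fin n → ℂ) (t : ℝ) :
    HasDerivAt (fun t : ℝ => (NormedSpace.exp (t • A)).mulVec z) (A.mulVec ((NormedSpace.exp (t • A)).mulVec z)) t := by
  have h := hasDerivAt_exp_smul_const' (𝕂 := ℝ) A t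
  let Lm : Matrix (Fin n) (Fin n) ℂ →ₗ[ℝ] (Fin n → ℂ) :=
    { toFun := fun M => M.mulVec z
      map_add' := fun M N => add_mulVec _ _ _
      map_smul' := fun c M => smul_mulVec _ _ _ }
  have := (LinearMap.toContinuousLinearMap Lm).hasFDerivAt.comp_hasDerivAt t h
  refine this.congr_deriv ?_
  rw [mulVec_mulVec]; rfl
end expo

section sphere
variable {n : ℕ} {Ω : Type*} [MeasurableSpace Ω] (P : Measure Ω) [IsProbabilityMeasure P]
  (Z : Ω → Fin n → ℂ)

/-- `Z` is uniform on the complex sphere. -/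
def Sph {n : ℕ} {Ω : Type*} [MeasurableSpace Ω] (P : Measure Ω) (Z : Ω → Fin n → ℂ) : Prop :=
  Measurable Z ∧ (∀ ω, ∑ j, Complex.normSq (Z ω j) = 1) ∧
  (∀ V ∈ Matrix.unitaryGroup (Fin n) ℂ,
          Measure.map (fun ω => Matrix.mulVec V (Z ω)) P = Measure.map Z P)

theorem sph_int (hP : Sph P Z) {X : Type*} [NormedAddCommGroup X] [MeasurableSpace X] [BorelSpace X] [SecondCountableTopology X] (G : (Fin n → ℂ) → X)
    (hG : Continuous G) : Integrable (fun ω => G (Z ω)) P := by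
  obtain ⟨hZ, hS, hU⟩ := id hP
  obtain ⟨C, hC⟩ := sph_bdd G hG
  exact Integrable.of_bound (hG.measurable.comp hZ).aestronglyMeasurable C
    (Filter.Eventually.of_forall fun ω => hC _ (hS ω))

theorem sph_inv (hP : Sph P Z) (G : (Fin n → ℂ) → ℂ) (hG : Continuous G) (V) (hV : V ∈ Matrix.unitaryGroup (Fin n) ℂ) :
    ∫ ω, G (V.mulVec (Z ω)) ∂P = ∫ ω, G (Z ω) ∂P := by
  obtain ⟨hZ, hS, hU⟩ := id hP
  have hm : Measurable (fun z : Fin n → ℂ => V.mulVec z) := by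
    have : Continuous (fun z : Fin n → ℂ => V.mulVec z) := by fun_prop
    exact this.measurable
  rw [← integral_map (φ := Z) hZ.aemeasurable hG.aestronglyMeasurable, ← hU V hV,
    integral_map (φ := fun ω => V.mulVec (Z ω)) (hm.comp hZ).aemeasurable hG.aestronglyMeasurable]

theorem sph_L0 (hP : Sph P Z) (G : (Fin n → ℂ) → ℂ) (hG : ContDiff ℝ 1 G) (A : Matrix (Fin n) (Fin n) ℂ)
    (hA : Aᴴ = -A) : ∫ ω, fderiv ℝ G (Z ω) (A.mulVec (Z ω)) ∂P = 0 := by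
  obtain ⟨hZ, hS, hU⟩ := id hP
  have hmv : Continuous fun z : Fin n → ℂ => A.mulVec z := by fun_prop
  have hc : Continuous fun z => fderiv ℝ G z (A.mulVec z) :=
    (hG.continuous_fderiv one_ne_zero).clm_apply hmv
  obtain ⟨C, hC⟩ := sph_bdd _ hc
  set U : ℝ → Matrix (Fin n) (Fin n) ℂ := fun t => NormedSpace.exp (t • A) with hUd
  have key := (hasDerivAt_integral_of_dominated_loc_of_deriv_le (μ := P) (s := Set.univ) (x₀ := (0:ℝ)) Filter.univ_mem
    (F := fun t ω => G ((U t).mulVec (Z ω)))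
    (F' := fun t ω => fderiv ℝ G ((U t).mulVec (Z ω)) (A.mulVec ((U t).mulVec (Z ω))))
    (bound := fun _ => C) ?_ ?_ ?_ ?_ ?_ ?_).2
  · have h1 : (fun t => ∫ ω, G ((U t).mulVec (Z ω)) ∂P) = fun _ => ∫ ω, G (Z ω) ∂P := by
      ext t
      exact sph_inv P Z hP G hG.continuous _ (exp_unitary A hA t)
    rw [h1] at key
    have := key.unique (hasDerivAt_const _ _)
    simpa [hUd] using this
  · refine Filter.Eventually.of_forall fun t => ?_
    have : Continuous fun z : Fin n → ℂ => G ((U t).mulVec z) := hG.continuous.comp (by fun_prop)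
    exact (this.measurable.comp hZ).aestronglyMeasurable
  · have : Continuous fun z : Fin n → ℂ => G ((U 0).mulVec z) := hG.continuous.comp (by fun_prop)
    exact sph_int P Z hP _ this
  · have : Continuous fun z : Fin n → ℂ => fderiv ℝ G ((U 0).mulVec z) (A.mulVec ((U 0).mulVec z)) :=
      hc.comp (g := fun z => fderiv ℝ G z (A.mulVec z)) (f := fun z => (U 0).mulVec z) (by fun_prop)
    exact (this.measurable.comp hZ).aestronglyMeasurable
  · exact Filter.Eventually.of_forall fun ω t _ => hC _ (sph_unitary _ (exp_unitary A hA t) _ (hS ω))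
  · exact integrable_const C
  · refine Filter.Eventually.of_forall fun ω t _ => ?_
    exact (hG.differentiable one_ne_zero).differentiableAt.hasFDerivAt.comp_hasDerivAt t (exp_deriv A (Z ω) t)
end sphere

open MeasureTheory ProbabilityTheory Matrix
open scoped Matrix

theorem qf_add {n : ℕ} (C D : Matrix (Fin n) (Fin n) ℂ) (z) : Qf (C + D) z = Qf C z + Qf D z := by
  simp [Qf, add_mulVec, dotProduct_add]
theorem qf_sub {n : ℕ} (C D : Matrix (Fin n) (Fin n) ℂ) (z) : Qf (C - D) z = Qf C z - Qf D z := by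
  simp [Qf, sub_mulVec, dotProduct_sub]
theorem qf_smul {n : ℕ} (a : ℂ) (D : Matrix (Fin n) (Fin n) ℂ) (z) : Qf (a • D) z = a * Qf D z := by
  simp [Qf, smul_mulVec, dotProduct_smul]
theorem qf_zero {n : ℕ} (z) : Qf (0 : Matrix (Fin n) (Fin n) ℂ) z = 0 := by
  simp [Qf]
theorem qf_sum {n : ℕ} {ι : Type*} (s : Finset ι) (C : ι → Matrix (Fin n) (Fin n) ℂ) (z) :
    Qf (∑ i ∈ s, C i) z = ∑ i ∈ s, Qf (C i) z := by
  classical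
  induction s using Finset.induction_on with
  | empty => simp [qf_zero]
  | insert a s ha ih => rw [Finset.sum_insert ha, Finset.sum_insert ha, qf_add, ih]
theorem qf_one {n : ℕ} (z) (hz : ∑ j, Complex.normSq (z j) = 1) : Qf (1 : Matrix (Fin n) (Fin n) ℂ) z = 1 := by
  rw [Qf, one_mulVec, dot_self, hz]; simp
theorem qf_star {n : ℕ} (C : Matrix (Fin n) (Fin n) ℂ) (z) : star (Qf C z) = Qf Cᴴ z := by
  rw [Qf, Qf, star_dotProduct, star_mulVec, ← dotProduct_mulVec, star_star]
theorem qf_real {n : ℕ} (C : Matrix (Fin n) (Fin n) ℂ) (hC : C.IsHermitian) (z) : (((Qf C z).re : ℝ) : ℂ) = Qf C z := by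
  apply Complex.conj_eq_iff_re.1
  have := qf_star C z
  rw [hC.eq] at this
  exact this

theorem qf_contDiff {n : ℕ} (C : Matrix (Fin n) (Fin n) ℂ) : ContDiff ℝ 2 (Qf C) := by
  have : Qf C = fun z => ∑ i, Complex.conjCLE (z i) * ∑ j, C i j * z j := by
    ext z; simp [Qf, dotProduct, mulVec]
  rw [this]
  fun_prop

theorem qf_fderiv {n : ℕ} (C : Matrix (Fin n) (Fin n) ℂ) (z w) :
    fderiv ℝ (Qf C) z w = star w ⬝ᵥ C.mulVec z + star z ⬝ᵥ C.mulVec w := by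
  have h1 : HasDerivAt (fun t : ℝ => z + t • w) w 0 := by
    simpa using ((hasDerivAt_id (0:ℝ)).smul_const w).const_add z
  have h2 : HasFDerivAt (Qf C) (fderiv ℝ (Qf C) z) (z + (0:ℝ) • w) := by
    simpa using ((qf_contDiff C).differentiable (by norm_num)).differentiableAt.hasFDerivAt
  have h3 := h2.comp_hasDerivAt (0:ℝ) h1
  have h4 : (Qf C ∘ fun t : ℝ => z + t • w) = fun t : ℝ => Qf C z + t • (star w ⬝ᵥ C.mulVec z + star z ⬝ᵥ C.mulVec w)
      + (t ^ 2) • Qf C w := by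
    ext t
    simp [Qf, mulVec_add, mulVec_smul, dotProduct_add, add_dotProduct, smul_dotProduct, dotProduct_smul]
    ring
  have h5 : HasDerivAt (fun t : ℝ => Qf C z + t • (star w ⬝ᵥ C.mulVec z + star z ⬝ᵥ C.mulVec w)
      + (t ^ 2) • Qf C w) (star w ⬝ᵥ C.mulVec z + star z ⬝ᵥ C.mulVec w) 0 := by
    have a1 := ((hasDerivAt_id (0:ℝ)).smul_const (star w ⬝ᵥ C.mulVec z + star z ⬝ᵥ C.mulVec w)).const_add (Qf C z)
    have a2 := ((hasDerivAt_pow 2 (0:ℝ)).smul_const (Qf C w))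
    refine (a1.add a2).congr_deriv ?_
    simp
  rw [h4] at h3
  exact h3.unique h5

theorem qf_fderiv_skew {n : ℕ} (C A : Matrix (Fin n) (Fin n) ℂ) (hA : Aᴴ = -A) (z) :
    fderiv ℝ (Qf C) z (A.mulVec z) = Qf (C * A - A * C) z := by
  rw [qf_fderiv, star_mulVec, ← dotProduct_mulVec, mulVec_mulVec, mulVec_mulVec, hA, qf_sub]
  simp [Qf, neg_mulVec]
  ring

/-- The vector of quadratic forms. -/
noncomputable def Xv {n d : ℕ} (B : Fin d → Matrix (Fin n) (Fin n) ℂ) (z : Fin n → ℂ) : Fin d → ℝ := fun k => (Qf (B k) z).re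

theorem Xv_contDiff {n d : ℕ} (B : Fin d → Matrix (Fin n) (Fin n) ℂ) : ContDiff ℝ 2 (Xv B) :=
  contDiff_pi.2 fun k => Complex.reCLM.contDiff.comp (qf_contDiff (B k))

theorem Xv_fderiv {n d : ℕ} (B : Fin d → Matrix (Fin n) (Fin n) ℂ) (z w) (k) :
    fderiv ℝ (Xv B) z w k = (fderiv ℝ (Qf (B k)) z w).re := by
  have h : HasFDerivAt (Xv B) (ContinuousLinearMap.pi fun k => Complex.reCLM.comp (fderiv ℝ (Qf (B k)) z)) z := by
    rw [hasFDerivAt_pi]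
    intro k
    exact Complex.reCLM.hasFDerivAt.comp z ((qf_contDiff (B k)).differentiable (by norm_num)).differentiableAt.hasFDerivAt
  rw [h.fderiv]; rfl

/-- Integrand of the basic identity. -/
noncomputable def Ig {n d : ℕ} (B : Fin d → Matrix (Fin n) (Fin n) ℂ) (F : (Fin d → ℝ) → ℝ) (C A : Matrix (Fin n) (Fin n) ℂ)
    (z : Fin n → ℂ) : ℂ :=
  ((F (Xv B z) : ℝ) : ℂ) * Qf (C * A - A * C) z +
    (∑ k, ((fderiv ℝ F (Xv B z) (Pi.single k 1) : ℝ) : ℂ) * Qf (B k * A - A * B k) z) * Qf C z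

theorem Ig_cont {n d : ℕ} (B : Fin d → Matrix (Fin n) (Fin n) ℂ) (F : (Fin d → ℝ) → ℝ) (hF : ContDiff ℝ 1 F)
    (C A : Matrix (Fin n) (Fin n) ℂ) : Continuous (Ig B F C A) := by
  have hQ : ∀ D : Matrix (Fin n) (Fin n) ℂ, Continuous (Qf D) := fun D => (qf_contDiff D).continuous
  have hX := (Xv_contDiff B).continuous
  have h1 : Continuous fun z => F (Xv B z) := hF.continuous.comp hX
  have h2 : ∀ k, Continuous fun z => fderiv ℝ F (Xv B z) (Pi.single k 1) := fun k =>
    ((hF.continuous_fderiv one_ne_zero).comp hX).clm_apply continuous_const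
  unfold Ig
  refine ((Complex.continuous_ofReal.comp h1).mul (hQ _)).add (Continuous.mul ?_ (hQ _))
  exact continuous_finsetSum _ fun k _ => (Complex.continuous_ofReal.comp (h2 k)).mul (hQ _)

section sphere2
variable {n d : ℕ} {Ω : Type*} [MeasurableSpace Ω] (P : Measure Ω) [IsProbabilityMeasure P]
  (Z : Ω → Fin n → ℂ)

theorem sph_L1 (hP : Sph P Z) (B : Fin d → Matrix (Fin n) (Fin n) ℂ) (hB : ∀ k, (B k).IsHermitian)
    (F : (Fin d → ℝ) → ℝ) (hF : ContDiff ℝ 1 F) (C A : Matrix (Fin n) (Fin n) ℂ) (hA : Aᴴ = -A) :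
    ∫ ω, Ig B F C A (Z ω) ∂P = 0 := by
  have hG1 : ContDiff ℝ 1 fun z => ((F (Xv B z) : ℝ) : ℂ) :=
    Complex.ofRealCLM.contDiff.comp (hF.comp ((Xv_contDiff B).of_le (by norm_num)))
  have hG2 : ContDiff ℝ 1 (Qf C) := (qf_contDiff C).of_le (by norm_num)
  have h := sph_L0 P Z hP (fun z => ((F (Xv B z) : ℝ) : ℂ) * Qf C z) (hG1.mul hG2) A hA
  rw [← h]
  congr 1
  ext ω
  set z := Z ω
  have d1 : HasFDerivAt (fun z => ((F (Xv B z) : ℝ) : ℂ)) (Complex.ofRealCLM.comp ((fderiv ℝ F (Xv B z)).comp (fderiv ℝ (Xv B) z))) z :=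
    Complex.ofRealCLM.hasFDerivAt.comp z ((hF.differentiable one_ne_zero).differentiableAt.hasFDerivAt.comp z
      ((Xv_contDiff B).differentiable (by norm_num)).differentiableAt.hasFDerivAt)
  have d2 : HasFDerivAt (Qf C) (fderiv ℝ (Qf C) z) z := ((qf_contDiff C).differentiable (by norm_num)).differentiableAt.hasFDerivAt
  have d3 : HasFDerivAt (fun z => ((F (Xv B z) : ℝ) : ℂ) * Qf C z) _ z := d1.mul d2
  rw [d3.fderiv]
  simp only [_root_.add_apply, _root_.smul_apply, ContinuousLinearMap.comp_apply, smul_eq_mul]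
  rw [qf_fderiv_skew C A hA, clm_expand (fderiv ℝ F (Xv B z))]
  simp only [Xv_fderiv, qf_fderiv_skew _ A hA, Complex.ofRealCLM_apply, Complex.ofReal_sum, Complex.ofReal_mul]
  have hr : ∀ k, (((Qf (B k * A - A * B k) z).re : ℝ) : ℂ) = Qf (B k * A - A * B k) z := by
    intro k
    apply qf_real
    rw [Matrix.IsHermitian, conjTranspose_sub, conjTranspose_mul, conjTranspose_mul, hA, (hB k).eq]
    noncomm_ring
  simp only [hr, Ig]
  ring

theorem sph_L2 (hP : Sph P Z) (B : Fin d → Matrix (Fin n) (Fin n) ℂ) (hB : ∀ k, (B k).IsHermitian)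
    (F : (Fin d → ℝ) → ℝ) (hF : ContDiff ℝ 1 F) (C M : Matrix (Fin n) (Fin n) ℂ) :
    ∫ ω, Ig B F C M (Z ω) ∂P = 0 := by
  set A1 : Matrix (Fin n) (Fin n) ℂ := (1/2 : ℂ) • (M - Mᴴ)
  set A2 : Matrix (Fin n) (Fin n) ℂ := (-Complex.I/2 : ℂ) • (M + Mᴴ)
  have h1 : A1ᴴ = -A1 := by
    simp [A1, conjTranspose_smul, ← smul_neg]
  have h2 : A2ᴴ = -A2 := by
    simp [A2, conjTranspose_smul, ← neg_smul, add_comm, neg_div]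
  have hM : M = A1 + Complex.I • A2 := by
    simp only [A1, A2, smul_smul]
    rw [show Complex.I * (-Complex.I/2) = 1/2 by rw [mul_div_assoc', mul_neg, Complex.I_mul_I]; ring, ← smul_add]
    rw [sub_add_add_cancel, ← two_smul ℂ M, smul_smul]; norm_num
  have hI : ∀ z, Ig B F C M z = Ig B F C A1 z + Complex.I * Ig B F C A2 z := by
    intro z
    have hc : ∀ D : Matrix (Fin n) (Fin n) ℂ, Qf (D * M - M * D) z = Qf (D * A1 - A1 * D) z + Complex.I * Qf (D * A2 - A2 * D) z := by
      intro D
      rw [← qf_smul, ← qf_add]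
      congr 1
      conv_lhs => rw [hM]
      simp only [mul_add, add_mul, smul_mul_assoc, mul_smul_comm, smul_sub]
      abel
    simp only [Ig, hc, mul_add, Finset.sum_add_distrib, add_mul, Finset.mul_sum, Finset.sum_mul]
    have : ∀ k, ((fderiv ℝ F (Xv B z) (Pi.single k 1) : ℝ) : ℂ) * (Complex.I * Qf (B k * A2 - A2 * B k) z) * Qf C z
      = Complex.I * (((fderiv ℝ F (Xv B z) (Pi.single k 1) : ℝ) : ℂ) * Qf (B k * A2 - A2 * B k) z * Qf C z) := fun k => by ring
    simp only [this]
    ring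
  simp only [hI]
  rw [integral_add (sph_int P Z hP _ (Ig_cont B F hF C A1)) ((sph_int P Z hP _ (Ig_cont B F hF C A2)).const_mul _),
    integral_const_mul, sph_L1 P Z hP B hB F hF C A1 h1, sph_L1 P Z hP B hB F hF C A2 h2]
  simp

theorem qf_mul_single (D : Matrix (Fin n) (Fin n) ℂ) (p q) (z) : Qf (D * Matrix.single p q 1) z = (star z ᵥ* D) p * z q := by
  rw [Qf, ← mulVec_mulVec, dotProduct_mulVec]
  have : (Matrix.single p q (1:ℂ)).mulVec z = Pi.single p (z q) := by
    rw [single_mulVec]; simp [Pi.single]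
  rw [this, dotProduct_single]
theorem qf_single_mul (D : Matrix (Fin n) (Fin n) ℂ) (p q) (z) : Qf (Matrix.single p q 1 * D) z = star (z p) * (D.mulVec z) q := by
  rw [Qf, ← mulVec_mulVec]
  have : (Matrix.single p q (1:ℂ)).mulVec (D.mulVec z) = Pi.single p (D.mulVec z q) := by
    rw [single_mulVec]; simp [Pi.single]
  rw [this, dotProduct_single]; rfl

theorem sum_Ig (B : Fin d → Matrix (Fin n) (Fin n) ℂ) (F : (Fin d → ℝ) → ℝ) (B0 : Matrix (Fin n) (Fin n) ℂ) (hT : B0.trace = 0)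
    (z) (hz : ∑ j, Complex.normSq (z j) = 1) :
    ∑ p, ∑ q, Ig B F (B0 * Matrix.single q p 1 - Matrix.single q p 1 * B0) (Matrix.single p q 1) z
    = 2 * n * (((F (Xv B z) : ℝ) : ℂ) * Qf B0 z) +
     ∑ k, ((fderiv ℝ F (Xv B z) (Pi.single k 1) : ℝ) : ℂ) * (2 * Qf (B k) z * Qf B0 z - Qf (B k * B0) z - Qf (B0 * B k) z) := by
  simp only [Ig, Finset.sum_add_distrib]
  have hzz : ∑ i, star (z i) * z i = 1 := by
    have := dot_self z
    rw [hz] at this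
    simpa [dotProduct] using this
  congr 1
  · have : ∀ p q : Fin n, Qf ((B0 * Matrix.single q p 1 - Matrix.single q p 1 * B0) * Matrix.single p q 1 -
        Matrix.single p q 1 * (B0 * Matrix.single q p 1 - Matrix.single q p 1 * B0)) z = 
        (star z ᵥ* B0) q * z q - B0 p p * (star (z q) * z q) - B0 q q * (star (z p) * z p) + star (z p) * (B0.mulVec z) p := by
      intro p q
      have e1 : (B0 * Matrix.single q p 1 - Matrix.single q p 1 * B0) * Matrix.single p q 1 -
        Matrix.single p q 1 * (B0 * Matrix.single q p 1 - Matrix.single q p 1 * B0) = 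
        B0 * Matrix.single q q 1 - B0 p p • (1 * Matrix.single q q 1) - B0 q q • (1 * Matrix.single p p 1) + Matrix.single p p 1 * B0 := by
        rw [sub_mul, mul_sub, ← mul_assoc, ← mul_assoc, mul_assoc B0]
        simp only [single_mul_single_same, single_mul_mul_single, one_mul, mul_one, smul_single, smul_eq_mul]
        abel
      rw [e1]
      simp only [qf_add, qf_sub, qf_smul, qf_mul_single, qf_single_mul, vecMul_one, Pi.star_apply]
    simp only [this, ← Finset.mul_sum]
    simp only [Finset.sum_add_distrib, Finset.sum_sub_distrib, ← Finset.mul_sum, ← Finset.sum_mul, hzz]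
    have ht : ∑ i, B0 i i = 0 := hT
    have hq1 : ∑ i, (star z ᵥ* B0) i * z i = Qf B0 z := by
      rw [Qf, dotProduct_mulVec]; rfl
    have hq2 : ∑ i, star (z i) * (B0.mulVec z) i = Qf B0 z := rfl
    rw [ht, hq1]
    simp only [Finset.sum_const, Finset.card_univ, Fintype.card_fin, nsmul_eq_mul]
    have hq3 : ∑ x, star (z x) * ((n : ℂ) * (B0.mulVec z) x) = n * Qf B0 z := by
      rw [← hq2, Finset.mul_sum]; exact Finset.sum_congr rfl fun x _ => by ring
    rw [hq3]
    ring
  · simp only [Finset.sum_mul]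
    rw [Finset.sum_congr rfl fun p _ => Finset.sum_comm, Finset.sum_comm]
    refine Finset.sum_congr rfl fun k _ => ?_
    simp only [mul_assoc, ← Finset.mul_sum]
    congr 1
    simp only [qf_sub, qf_mul_single, qf_single_mul]
    have : ∀ D E : Matrix (Fin n) (Fin n) ℂ, Qf (D * E) z = ∑ p, (star z ᵥ* D) p * (E.mulVec z) p := by
      intro D E
      rw [Qf, ← mulVec_mulVec, dotProduct_mulVec]; rfl
    rw [this, this]
    have hq1 : ∀ D : Matrix (Fin n) (Fin n) ℂ, ∑ i, (star z ᵥ* D) i * z i = Qf D z := by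
      intro D; rw [Qf, dotProduct_mulVec]; rfl
    have hq2 : ∀ D : Matrix (Fin n) (Fin n) ℂ, ∑ i, star (z i) * (D.mulVec z) i = Qf D z := fun D => rfl
    have key : ∀ u v u' v' : Fin n → ℂ, ∑ p, ∑ q, (u p * z q - star (z p) * v q) * (u' q * z p - star (z q) * v' p)
       = (∑ p, u p * z p) * (∑ q, u' q * z q) - (∑ p, u p * v' p) * (∑ q, star (z q) * z q)
         - (∑ p, star (z p) * z p) * (∑ q, u' q * v q) + (∑ p, star (z p) * v' p) * (∑ q, star (z q) * v q) := by
      intro u v u' v'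
      simp only [Finset.sum_mul_sum, ← Finset.sum_sub_distrib, ← Finset.sum_add_distrib]
      refine Finset.sum_congr rfl fun p _ => Finset.sum_congr rfl fun q _ => ?_
      ring
    rw [key, hq1, hq1, hq2, hq2, hzz]
    ring

theorem sph_L4 (hP : Sph P Z) (B : Fin d → Matrix (Fin n) (Fin n) ℂ) (hB : ∀ k, (B k).IsHermitian)
    (F : (Fin d → ℝ) → ℝ) (hF : ContDiff ℝ 1 F) (B0 : Matrix (Fin n) (Fin n) ℂ) (hB0 : B0.IsHermitian) (hT : B0.trace = 0) :
    n * ∫ ω, (Qf B0 (Z ω)).re * F (Xv B (Z ω)) ∂P =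
    ∫ ω, ∑ k, ((Qf ((1/2 : ℂ) • (B0 * B k + B k * B0)) (Z ω)).re - (Qf B0 (Z ω)).re * (Qf (B k) (Z ω)).re) *
      fderiv ℝ F (Xv B (Z ω)) (Pi.single k 1) ∂P := by
  have h1 : ∫ ω, ∑ p, ∑ q, Ig B F (B0 * Matrix.single q p 1 - Matrix.single q p 1 * B0) (Matrix.single p q 1) (Z ω) ∂P = 0 := by
    have hi : ∀ p q, Integrable (fun ω => Ig B F (B0 * Matrix.single q p 1 - Matrix.single q p 1 * B0) (Matrix.single p q 1) (Z ω)) P :=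
      fun p q => sph_int P Z hP _ (Ig_cont B F hF _ _)
    rw [integral_finsetSum _ fun p _ => integrable_finsetSum _ fun q _ => hi p q]
    refine Finset.sum_eq_zero fun p _ => ?_
    rw [integral_finsetSum _ fun q _ => hi p q]
    exact Finset.sum_eq_zero fun q _ => sph_L2 P Z hP B hB F hF _ _
  have hpt : ∀ ω, ∑ p, ∑ q, Ig B F (B0 * Matrix.single q p 1 - Matrix.single q p 1 * B0) (Matrix.single p q 1) (Z ω) = 
      ((2 * (n * ((Qf B0 (Z ω)).re * F (Xv B (Z ω))) - 
      ∑ k, ((Qf ((1/2 : ℂ) • (B0 * B k + B k * B0)) (Z ω)).re - (Qf B0 (Z ω)).re * (Qf (B k) (Z ω)).re) *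
      fderiv ℝ F (Xv B (Z ω)) (Pi.single k 1)) : ℝ) : ℂ) := by
    intro ω
    have hh : ∀ k, ((1/2 : ℂ) • (B0 * B k + B k * B0)).IsHermitian := by
      intro k
      rw [Matrix.IsHermitian, conjTranspose_smul, conjTranspose_add, conjTranspose_mul, conjTranspose_mul, hB0.eq, (hB k).eq, add_comm]
      simp
    rw [sum_Ig B F B0 hT _ (hP.2.1 ω)]
    push_cast
    simp only [qf_real _ (hB _), qf_real _ hB0, qf_real _ (hh _)]
    simp only [qf_smul, qf_add]
    rw [mul_sub, Finset.mul_sum, sub_eq_add_neg, ← Finset.sum_neg_distrib]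
    congr 1
    · ring
    · refine Finset.sum_congr rfl fun k _ => ?_
      ring
  simp only [hpt] at h1
  rw [integral_complex_ofReal] at h1
  have h2 := Complex.ofReal_eq_zero.1 h1
  rw [integral_const_mul] at h2
  have h3 := (mul_eq_zero.1 h2).resolve_left two_ne_zero
  have hX := (Xv_contDiff B).continuous
  have hQ : ∀ D : Matrix (Fin n) (Fin n) ℂ, Continuous fun z => (Qf D z).re := fun D => Complex.continuous_re.comp (qf_contDiff D).continuous
  rw [integral_sub, integral_const_mul, sub_eq_zero] at h3
  · exact h3
  · exact (sph_int P Z hP (fun z => (Qf B0 z).re * F (Xv B z)) ((hQ _).mul (hF.continuous.comp hX))).const_mul _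
  · refine sph_int P Z hP (fun z => ∑ k, ((Qf ((1/2 : ℂ) • (B0 * B k + B k * B0)) z).re - (Qf B0 z).re * (Qf (B k) z).re) *
      fderiv ℝ F (Xv B z) (Pi.single k 1)) ?_
    refine continuous_finsetSum _ fun k _ => ((hQ _).sub ((hQ _).mul (hQ _))).mul ?_
    exact ((hF.continuous_fderiv one_ne_zero).comp hX).clm_apply continuous_const
end sphere2

open MeasureTheory ProbabilityTheory Matrix
open scoped Matrix

/-- Squared Frobenius norm. -/
noncomputable def fr {n : ℕ} (M : Matrix (Fin n) (Fin n) ℂ) : ℝ := ∑ p, ∑ q, ‖M p q‖ ^ 2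

theorem fr_nonneg {n : ℕ} (M : Matrix (Fin n) (Fin n) ℂ) : 0 ≤ fr M := by unfold fr; positivity

theorem fr_eq {n : ℕ} (M : Matrix (Fin n) (Fin n) ℂ) : ((fr M : ℝ) : ℂ) = (M * Mᴴ).trace := by
  simp only [fr, trace, diag, mul_apply, conjTranspose_apply]
  push_cast
  refine Finset.sum_congr rfl fun p _ => Finset.sum_congr rfl fun q _ => ?_
  exact (Complex.mul_conj' _).symm

theorem fr_eq_re {n : ℕ} (M : Matrix (Fin n) (Fin n) ℂ) : fr M = (M * Mᴴ).trace.re := by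
  rw [← fr_eq, Complex.ofReal_re]

theorem fr_herm {n : ℕ} (M : Matrix (Fin n) (Fin n) ℂ) (hM : M.IsHermitian) : (M * M).trace.re = fr M := by
  rw [fr_eq_re, hM.eq]

theorem fr_mul {n : ℕ} (M N : Matrix (Fin n) (Fin n) ℂ) : fr (M * N) ≤ fr M * fr N := by
  have h : ∀ p q, ‖(M * N) p q‖ ^ 2 ≤ (∑ r, ‖M p r‖ ^ 2) * ∑ r, ‖N r q‖ ^ 2 := by
    intro p q
    rw [mul_apply]
    calc ‖∑ r, M p r * N r q‖ ^ 2 ≤ (∑ r, ‖M p r‖ * ‖N r q‖) ^ 2 := by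
          gcongr
          exact (norm_sum_le _ _).trans (le_of_eq (by simp))
      _ ≤ _ := Finset.sum_mul_sq_le_sq_mul_sq _ _ _
  calc fr (M * N) ≤ ∑ p, ∑ q, (∑ r, ‖M p r‖ ^ 2) * ∑ r, ‖N r q‖ ^ 2 :=
        Finset.sum_le_sum fun p _ => Finset.sum_le_sum fun q _ => h p q
    _ = fr M * fr N := by
        rw [← Finset.sum_mul_sum, fr, fr, Finset.sum_comm (f := fun q r => ‖N r q‖ ^ 2)]

theorem tr_cs {n : ℕ} (M N : Matrix (Fin n) (Fin n) ℂ) : (M * N).trace.re ≤ √(fr M) * √(fr N) := by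
  have h1 : (M * N).trace.re ≤ ∑ x : Fin n × Fin n, ‖M x.1 x.2‖ * ‖N x.2 x.1‖ := by
    refine (Complex.re_le_norm _).trans ?_
    rw [Fintype.sum_prod_type]
    simp only [trace, diag, mul_apply]
    refine (norm_sum_le _ _).trans (Finset.sum_le_sum fun p _ => ?_)
    exact (norm_sum_le _ _).trans (le_of_eq (by simp))
  refine h1.trans ((Real.sum_mul_le_sqrt_mul_sqrt _ _ _).trans (le_of_eq ?_))
  rw [Fintype.sum_prod_type, Fintype.sum_prod_type_right]
  rfl

theorem fr_avg {n : ℕ} (M N : Matrix (Fin n) (Fin n) ℂ) : fr ((1/2 : ℂ) • (M + N)) ≤ (fr M + fr N) / 2 := by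
  simp only [fr, ← Finset.sum_add_distrib, Finset.sum_div]
  refine Finset.sum_le_sum fun p _ => Finset.sum_le_sum fun q _ => ?_
  have : ‖((1/2 : ℂ) • (M + N)) p q‖ ≤ (‖M p q‖ + ‖N p q‖) / 2 := by
    have := norm_add_le (M p q) (N p q)
    simp [Matrix.smul_apply]
    linarith
  have h0 := norm_nonneg (((1/2 : ℂ) • (M + N)) p q)
  nlinarith [sq_nonneg (‖M p q‖ - ‖N p q‖)]

theorem fr_prod {n : ℕ} (M N : Matrix (Fin n) (Fin n) ℂ) (hM : M.IsHermitian) (hN : N.IsHermitian) :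
    fr (M * N) ≤ √(fr (M * M)) * √(fr (N * N)) := by
  rw [fr_eq_re, conjTranspose_mul, hM.eq, hN.eq]
  have : (M * N * (N * M)).trace = ((M * M) * (N * N)).trace := by
    rw [← mul_assoc, trace_mul_comm]; simp only [mul_assoc]
  rw [this]
  exact tr_cs _ _

theorem fr_anti {n : ℕ} (M N : Matrix (Fin n) (Fin n) ℂ) (hM : M.IsHermitian) (hN : N.IsHermitian) :
    fr ((1/2 : ℂ) • (M * N + N * M)) ≤ √(fr (M * M)) * √(fr (N * N)) := by
  have h1 := fr_avg (M * N) (N * M)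
  have h2 := fr_prod M N hM hN
  have h3 := fr_prod N M hN hM
  linarith

theorem fr_lower {n : ℕ} (M : Matrix (Fin n) (Fin n) ℂ) (hM : (M * M).trace = 1) : 1 ≤ n * fr (M * M) := by
  have h1 : (1 : ℝ) ≤ ∑ p, ‖(M * M) p p‖ := by
    have : ‖(M * M).trace‖ ≤ ∑ p, ‖(M * M) p p‖ := norm_sum_le _ _
    rwa [hM, norm_one] at this
  have h2 : (∑ p, ‖(M * M) p p‖) ^ 2 ≤ n * ∑ p, ‖(M * M) p p‖ ^ 2 := by
    simpa using sq_sum_le_card_mul_sum_sq (s := Finset.univ) (f := fun p => ‖(M * M) p p‖)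
  have h3 : ∑ p, ‖(M * M) p p‖ ^ 2 ≤ fr (M * M) :=
    Finset.sum_le_sum fun p _ => Finset.single_le_sum (f := fun q => ‖(M * M) p q‖ ^ 2) (fun q _ => by positivity) (Finset.mem_univ p)
  have h4 : (n : ℝ) * ∑ p, ‖(M * M) p p‖ ^ 2 ≤ n * fr (M * M) := by gcongr
  nlinarith

section moments
variable {n d : ℕ} {Ω : Type*} [MeasurableSpace Ω] (P : Measure Ω) [IsProbabilityMeasure P]
  (Z : Ω → Fin n → ℂ)

theorem q_cont (D : Matrix (Fin n) (Fin n) ℂ) : Continuous fun z => (Qf D z).re :=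
  Complex.continuous_re.comp (qf_contDiff D).continuous

theorem m1 (hP : Sph P Z) (hn : 0 < n) (D : Matrix (Fin n) (Fin n) ℂ) (hD : D.IsHermitian) (hT : D.trace = 0) :
    ∫ ω, (Qf D (Z ω)).re ∂P = 0 := by
  have h := sph_L4 (d := 0) P Z hP (fun _ => 0) (fun k => k.elim0) (fun _ => 1) contDiff_const D hD hT
  have hn' : (n : ℝ) ≠ 0 := by exact_mod_cast hn.ne'
  simpa [hn'] using h

/-- Traceless part. -/
noncomputable def tl (D : Matrix (Fin n) (Fin n) ℂ) : Matrix (Fin n) (Fin n) ℂ := D - ((D.trace.re / n : ℝ) : ℂ) • 1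

theorem herm_trace (D : Matrix (Fin n) (Fin n) ℂ) (hD : D.IsHermitian) : ((D.trace.re : ℝ) : ℂ) = D.trace := by
  apply Complex.conj_eq_iff_re.1
  have := trace_conjTranspose D
  rw [hD.eq] at this
  exact this.symm

theorem tl_herm (D : Matrix (Fin n) (Fin n) ℂ) (hD : D.IsHermitian) : (tl D).IsHermitian := by
  rw [Matrix.IsHermitian, tl, conjTranspose_sub, conjTranspose_smul, hD.eq, conjTranspose_one]
  congr 2
  exact Complex.conj_ofReal _

theorem tl_trace (hn : 0 < n) (D : Matrix (Fin n) (Fin n) ℂ) (hD : D.IsHermitian) : (tl D).trace = 0 := by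
  have hn' : (n : ℂ) ≠ 0 := by exact_mod_cast hn.ne'
  rw [tl, trace_sub, trace_smul, trace_one]
  push_cast
  rw [herm_trace D hD]
  simp [hn']

theorem tl_qf (D : Matrix (Fin n) (Fin n) ℂ) (z) (hz : ∑ j, Complex.normSq (z j) = 1) :
    (Qf D z).re = (Qf (tl D) z).re + D.trace.re / n := by
  rw [tl, qf_sub, qf_smul, qf_one z hz, mul_one, Complex.sub_re, Complex.ofReal_re]; ring

theorem tl_fr (hn : 0 < n) (D : Matrix (Fin n) (Fin n) ℂ) (hD : D.IsHermitian) : fr (tl D) ≤ fr D := by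
  have hn' : (n : ℝ) ≠ 0 := by exact_mod_cast hn.ne'
  have h : fr (tl D) = fr D - D.trace.re ^ 2 / n := by
    rw [← fr_herm _ (tl_herm D hD), ← fr_herm D hD]
    have : tl D * tl D = D * D - (((2 * (D.trace.re / n) : ℝ)) : ℂ) • D + (((D.trace.re / n) ^ 2 : ℝ) : ℂ) • 1 := by
      rw [tl]
      simp only [sub_mul, mul_sub, smul_mul_assoc, mul_smul_comm, one_mul, mul_one]
      push_cast
      module
    rw [this, trace_add, trace_sub, trace_smul, trace_smul, trace_one, Complex.add_re, Complex.sub_re, smul_eq_mul, smul_eq_mul,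
      Complex.re_ofReal_mul, Complex.re_ofReal_mul]
    simp
    field_simp
    ring
  rw [h]
  have : 0 ≤ D.trace.re ^ 2 / n := by positivity
  linarith

theorem m1' (hP : Sph P Z) (hn : 0 < n) (D : Matrix (Fin n) (Fin n) ℂ) (hD : D.IsHermitian) :
    ∫ ω, (Qf D (Z ω)).re ∂P = D.trace.re / n := by
  simp only [fun ω => tl_qf D (Z ω) (hP.2.1 ω)]
  rw [integral_add (sph_int P Z hP _ (q_cont _)) (integrable_const _), m1 P Z hP hn _ (tl_herm D hD) (tl_trace hn D hD)]
  simp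

theorem m2 (hP : Sph P Z) (hn : 0 < n) (D : Matrix (Fin n) (Fin n) ℂ) (hD : D.IsHermitian) (hT : D.trace = 0) :
    ∫ ω, (Qf D (Z ω)).re ^ 2 ∂P = fr D / (n * (n + 1)) := by
  have hn' : (n : ℝ) ≠ 0 := by exact_mod_cast hn.ne'
  have h := sph_L4 (d := 1) P Z hP (fun _ => D) (fun k => hD) (fun x => x 0) (by fun_prop) D hD hT
  have hd : ∀ x v : Fin 1 → ℝ, fderiv ℝ (fun x : Fin 1 → ℝ => x 0) x v = v 0 := by
    intro x v
    have h2 : HasFDerivAt (fun x : Fin 1 → ℝ => x 0) (ContinuousLinearMap.proj (R := ℝ) (φ := fun _ : Fin 1 => ℝ) 0) x :=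
      (ContinuousLinearMap.proj (R := ℝ) (φ := fun _ : Fin 1 => ℝ) 0).hasFDerivAt
    rw [h2.fderiv]; rfl
  have hDD : (D * D).IsHermitian := by
    rw [Matrix.IsHermitian, conjTranspose_mul, hD.eq]
  have hav : (1/2 : ℂ) • (D * D + D * D) = D * D := by
    rw [← two_smul ℂ (D * D), smul_smul]; norm_num
  simp only [hd, Xv, hav, Fin.sum_univ_one, Pi.single_eq_same, mul_one] at h
  have i2 : Integrable (fun ω => (Qf D (Z ω)).re * (Qf D (Z ω)).re) P := sph_int P Z hP _ ((q_cont _).mul (q_cont _))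
  rw [integral_sub (sph_int P Z hP _ (q_cont _)) i2, m1' P Z hP hn _ hDD, fr_herm D hD] at h
  simp only [pow_two]
  have hn1 : (n : ℝ) + 1 ≠ 0 := by positivity
  field_simp at h ⊢
  linarith

theorem m2' (hP : Sph P Z) (hn : 0 < n) (D : Matrix (Fin n) (Fin n) ℂ) (hD : D.IsHermitian) :
    ∫ ω, (Qf D (Z ω)).re ^ 2 ∂P ≤ D.trace.re ^ 2 / n ^ 2 + fr D / (n * (n + 1)) := by
  have e : ∀ ω, (Qf D (Z ω)).re ^ 2 = (Qf (tl D) (Z ω)).re ^ 2 + ((2 * (D.trace.re / n)) * (Qf (tl D) (Z ω)).re + (D.trace.re / n) ^ 2) := by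
    intro ω
    rw [tl_qf D (Z ω) (hP.2.1 ω)]; ring
  simp only [e]
  have i1 := sph_int P Z hP _ (q_cont (tl D))
  have i2 : Integrable (fun ω => (Qf (tl D) (Z ω)).re ^ 2) P := sph_int P Z hP _ ((q_cont (tl D)).pow 2)
  have i3 : Integrable (fun ω => (2 * (D.trace.re / n)) * (Qf (tl D) (Z ω)).re + (D.trace.re / n) ^ 2) P :=
    (i1.const_mul _).add (integrable_const _)
  rw [integral_add i2 i3, integral_add (i1.const_mul _) (integrable_const _), integral_const_mul,
    m1 P Z hP hn _ (tl_herm D hD) (tl_trace hn D hD), m2 P Z hP hn _ (tl_herm D hD) (tl_trace hn D hD)]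
  simp only [mul_zero, zero_add, integral_const, probReal_univ, one_smul, div_pow]
  have : fr (tl D) / (n * (n + 1)) ≤ fr D / (n * (n + 1)) := by
    gcongr; exact tl_fr hn D hD
  linarith

theorem m4 (hP : Sph P Z) (hn : 0 < n) (B : Matrix (Fin n) (Fin n) ℂ) (hB : B.IsHermitian) (hT : B.trace = 0)
    (h1 : (B * B).trace = 1) : ∫ ω, (Qf B (Z ω)).re ^ 4 ∂P ≤ 18 / n ^ 4 := by
  have hn' : (0 : ℝ) < n := by exact_mod_cast hn
  have h := sph_L4 (d := 1) P Z hP (fun _ => B) (fun k => hB) (fun x => x 0 ^ 3) (by fun_prop) B hB hT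
  have hd : ∀ x v : Fin 1 → ℝ, fderiv ℝ (fun x : Fin 1 → ℝ => x 0 ^ 3) x v = 3 * x 0 ^ 2 * v 0 := by
    intro x v
    have := ((ContinuousLinearMap.proj (R := ℝ) (φ := fun _ : Fin 1 => ℝ) 0).hasFDerivAt (x := x)).pow 3
    have h2 : HasFDerivAt (fun x : Fin 1 → ℝ => x 0 ^ 3) _ x := this
    rw [h2.fderiv]
    simp
  have hDD : (B * B).IsHermitian := by
    rw [Matrix.IsHermitian, conjTranspose_mul, hB.eq]
  have hav : (1/2 : ℂ) • (B * B + B * B) = B * B := by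
    rw [← two_smul ℂ (B * B), smul_smul]; norm_num
  simp only [hd, Xv, hav, Fin.sum_univ_one, Pi.single_eq_same, mul_one] at h
  have e1 : ∀ ω, (Qf B (Z ω)).re ^ 4 = (Qf B (Z ω)).re * (Qf B (Z ω)).re ^ 3 := fun ω => by ring
  have i4 : Integrable (fun ω => (Qf B (Z ω)).re ^ 4) P := sph_int P Z hP _ ((q_cont B).pow 4)
  have i2 : Integrable (fun ω => (Qf (B * B) (Z ω)).re ^ 2) P := sph_int P Z hP _ ((q_cont (B * B)).pow 2)
  have hle : ∫ ω, ((Qf (B * B) (Z ω)).re - (Qf B (Z ω)).re * (Qf B (Z ω)).re) * (3 * (Qf B (Z ω)).re ^ 2) ∂P ≤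
      ∫ ω, ((n / 2) * (Qf B (Z ω)).re ^ 4 + (9 / (2 * n)) * (Qf (B * B) (Z ω)).re ^ 2) ∂P := by
    refine integral_mono (sph_int P Z hP _ (((q_cont _).sub ((q_cont _).mul (q_cont _))).mul (continuous_const.mul ((q_cont _).pow 2))))
      ((i4.const_mul _).add (i2.const_mul _)) fun ω => ?_
    set x := (Qf B (Z ω)).re
    set y := (Qf (B * B) (Z ω)).re
    have : (n / 2) * x ^ 4 + (9 / (2 * n)) * y ^ 2 - 3 * x ^ 2 * y = (1 / (2 * n)) * (n * x ^ 2 - 3 * y) ^ 2 := by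
      field_simp; ring
    have h2 : 0 ≤ (1 / (2 * n : ℝ)) * (n * x ^ 2 - 3 * y) ^ 2 := by positivity
    show (y - x * x) * (3 * x ^ 2) ≤ (n / 2) * x ^ 4 + (9 / (2 * n)) * y ^ 2
    nlinarith [sq_nonneg (x ^ 2)]
  rw [← h] at hle
  simp only [← e1] at hle
  rw [integral_add (i4.const_mul _) (i2.const_mul _), integral_const_mul, integral_const_mul] at hle
  have hfr : fr (B * B) ≤ 1 := by
    have a := fr_mul B B
    rw [← fr_herm B hB, h1] at a
    simpa using a
  have hq := m2' P Z hP hn (B * B) hDD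
  rw [h1] at hq
  have hq2 : ∫ ω, (Qf (B * B) (Z ω)).re ^ 2 ∂P ≤ 2 / n ^ 2 := by
    have : fr (B * B) / (n * (n + 1)) ≤ 1 / (n : ℝ) ^ 2 := by
      rw [pow_two]
      gcongr
      linarith
    simp only [Complex.one_re, one_pow] at hq
    have e : (2 : ℝ) / n ^ 2 = 1 / n ^ 2 + 1 / n ^ 2 := by ring
    linarith
  have h5 : (9 / (2 * n : ℝ)) * ∫ ω, (Qf (B * B) (Z ω)).re ^ 2 ∂P ≤ (9 / (2 * n : ℝ)) * (2 / n ^ 2) := by gcongr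
  have h6 : (n / 2 : ℝ) * ∫ ω, (Qf B (Z ω)).re ^ 4 ∂P ≤ 9 / n ^ 3 := by
    have : (9 / (2 * n : ℝ)) * (2 / n ^ 2) = 9 / n ^ 3 := by field_simp
    linarith
  have h7 : (2 / n : ℝ) * ((n / 2 : ℝ) * ∫ ω, (Qf B (Z ω)).re ^ 4 ∂P) ≤ (2 / n) * (9 / n ^ 3) := by gcongr
  have e2 : (2 / n : ℝ) * (9 / n ^ 3) = 18 / n ^ 4 := by field_simp; norm_num
  have e3 : (2 / n : ℝ) * ((n / 2 : ℝ) * ∫ ω, (Qf B (Z ω)).re ^ 4 ∂P) = ∫ ω, (Qf B (Z ω)).re ^ 4 ∂P := by field_simp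
  linarith
end moments

theorem fr_op {n : ℕ} (M N : Matrix (Fin n) (Fin n) ℂ) : fr (M * N) ≤ opNormC M ^ 2 * fr N := by
  have h : ∀ q, ∑ p, ‖(M * N) p q‖ ^ 2 ≤ opNormC M ^ 2 * ∑ p, ‖N p q‖ ^ 2 := by
    intro q
    have h1 := (Matrix.toEuclideanCLM (𝕜 := ℂ) M).le_opNorm (WithLp.toLp 2 fun p => N p q)
    have h2 : Matrix.toEuclideanCLM (𝕜 := ℂ) M (WithLp.toLp 2 fun p => N p q) = WithLp.toLp 2 fun p => (M * N) p q := by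
      rw [Matrix.toEuclideanCLM_toLp]
      rfl
    rw [h2] at h1
    have h3 := pow_le_pow_left₀ (norm_nonneg _) h1 2
    rw [mul_pow, EuclideanSpace.norm_sq_eq, EuclideanSpace.norm_sq_eq] at h3
    exact h3
  rw [fr, fr, Finset.sum_comm, Finset.sum_comm (f := fun p q => ‖N p q‖ ^ 2), Finset.mul_sum]
  exact Finset.sum_le_sum fun q _ => h q

section main
variable {n d : ℕ} {Ω : Type*} [MeasurableSpace Ω] (P : Measure Ω) [IsProbabilityMeasure P]
  (Z : Ω → Fin n → ℂ)

/-- Stein matrix. -/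
noncomputable def Tm (B : Fin d → Matrix (Fin n) (Fin n) ℂ) (j k : Fin d) (z : Fin n → ℂ) : ℝ :=
  (n + 1) * ((Qf ((1/2 : ℂ) • (B j * B k + B k * B j)) z).re - (Qf (B j) z).re * (Qf (B k) z).re)

theorem Tm_cont (B : Fin d → Matrix (Fin n) (Fin n) ℂ) (j k : Fin d) : Continuous (Tm B j k) :=
  continuous_const.mul ((q_cont _).sub ((q_cont _).mul (q_cont _)))

theorem Tm_bound (hP : Sph P Z) (hn : 0 < n) (B : Fin d → Matrix (Fin n) (Fin n) ℂ) (hB : ∀ j, (B j).IsHermitian)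
    (hT : ∀ j, (B j).trace = 0) (hO : ∀ j k, ((B j) * (B k)).trace = if j = k then (1 : ℂ) else 0) (j k : Fin d) :
    ∫ ω, (Tm B j k (Z ω) - if j = k then 1 else 0) ^ 2 ∂P ≤ 225 * (√(fr (B j * B j)) * √(fr (B k * B k))) := by
  have hn' : (0 : ℝ) < n := by exact_mod_cast hn
  have hn1 : (1 : ℝ) ≤ n := by exact_mod_cast hn
  set A := (1/2 : ℂ) • (B j * B k + B k * B j) with hA
  set δ : ℝ := if j = k then 1 else 0 with hδ
  have hδ1 : δ ^ 2 ≤ 1 := by rw [hδ]; split_ifs <;> norm_num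
  have hAh : A.IsHermitian := by
    rw [Matrix.IsHermitian, hA, conjTranspose_smul, conjTranspose_add, conjTranspose_mul, conjTranspose_mul, (hB j).eq, (hB k).eq, add_comm]
    simp
  have hAt : A.trace.re = δ := by
    rw [hA, trace_smul, trace_add, trace_mul_comm (B k), hO, hδ]
    split_ifs <;> norm_num
  have i1 : Integrable (fun ω => (Qf (tl A) (Z ω)).re ^ 2) P := sph_int P Z hP _ ((q_cont (tl A)).pow 2)
  have i2 : ∀ j, Integrable (fun ω => (Qf (B j) (Z ω)).re ^ 4) P := fun j => sph_int P Z hP _ ((q_cont _).pow 4)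
  have hle : ∫ ω, (Tm B j k (Z ω) - δ) ^ 2 ∂P ≤ ∫ ω, ((3 * (n + 1) ^ 2 * (Qf (tl A) (Z ω)).re ^ 2 + 3 / n ^ 2) +
      (3 * (n + 1) ^ 2 / 2) * ((Qf (B j) (Z ω)).re ^ 4 + (Qf (B k) (Z ω)).re ^ 4)) ∂P := by
    refine integral_mono (sph_int P Z hP _ (((Tm_cont B j k).sub continuous_const).pow 2))
      (((i1.const_mul _).add (integrable_const _)).add (((i2 j).add (i2 k)).const_mul _)) fun ω => ?_
    show (Tm B j k (Z ω) - δ) ^ 2 ≤ (3 * (n + 1) ^ 2 * (Qf (tl A) (Z ω)).re ^ 2 + 3 / n ^ 2) +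
      (3 * (n + 1) ^ 2 / 2) * ((Qf (B j) (Z ω)).re ^ 4 + (Qf (B k) (Z ω)).re ^ 4)
    rw [Tm, ← hA, tl_qf A (Z ω) (hP.2.1 ω), hAt]
    generalize (Qf (tl A) (Z ω)).re = a
    generalize (Qf (B j) (Z ω)).re = x
    generalize (Qf (B k) (Z ω)).re = y
    have e : (n + 1) * (a + δ / n - x * y) - δ = (n + 1) * a + δ / n - (n + 1) * (x * y) := by field_simp; ring
    rw [e]
    have h1 : ((n + 1) * a + δ / n - (n + 1) * (x * y)) ^ 2 ≤ 3 * (((n + 1) * a) ^ 2 + (δ / n) ^ 2 + ((n + 1) * (x * y)) ^ 2) := by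
      nlinarith [sq_nonneg ((n + 1) * a - δ / n), sq_nonneg ((n + 1) * a + (n + 1) * (x * y)), sq_nonneg (δ / n + (n + 1) * (x * y))]
    have h2 : (δ / n) ^ 2 ≤ 1 / n ^ 2 := by rw [div_pow]; gcongr
    have h3 : ((n + 1) * (x * y)) ^ 2 ≤ ((n : ℝ) + 1) ^ 2 * ((x ^ 4 + y ^ 4) / 2) := by
      rw [mul_pow]; gcongr; nlinarith [sq_nonneg (x ^ 2 - y ^ 2)]
    have e2 : (3 : ℝ) / n ^ 2 = 3 * (1 / n ^ 2) := by ring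
    rw [e2]
    nlinarith
  refine hle.trans ?_
  have i3 : Integrable (fun ω => (3 * (n + 1) ^ 2 * (Qf (tl A) (Z ω)).re ^ 2 + 3 / (n : ℝ) ^ 2)) P := (i1.const_mul _).add (integrable_const _)
  have i4 : Integrable (fun ω => (3 * ((n : ℝ) + 1) ^ 2 / 2) * ((Qf (B j) (Z ω)).re ^ 4 + (Qf (B k) (Z ω)).re ^ 4)) P :=
    ((i2 j).add (i2 k)).const_mul _
  rw [integral_add i3 i4, integral_add (i1.const_mul _) (integrable_const _), integral_const_mul, integral_const_mul]
  have e3 : ∫ ω, ((Qf (B j) (Z ω)).re ^ 4 + (Qf (B k) (Z ω)).re ^ 4) ∂P = _ := integral_add (i2 j) (i2 k)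
  rw [e3, m2 P Z hP hn _ (tl_herm A hAh) (tl_trace hn A hAh)]
  simp only [integral_const, probReal_univ, one_smul]
  have b1 := m4 P Z hP hn (B j) (hB j) (hT j) (by simp [hO])
  have b2 := m4 P Z hP hn (B k) (hB k) (hT k) (by simp [hO])
  have b3 : fr (tl A) ≤ √(fr (B j * B j)) * √(fr (B k * B k)) := (tl_fr hn A hAh).trans (fr_anti _ _ (hB j) (hB k))
  have b4 : 1 / (n : ℝ) ≤ √(fr (B j * B j)) * √(fr (B k * B k)) := by
    have l : ∀ j, √(1 / (n : ℝ)) ≤ √(fr (B j * B j)) := by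
      intro j
      apply Real.sqrt_le_sqrt
      rw [div_le_iff₀ hn', mul_comm]
      exact fr_lower (B j) (by simp [hO])
    calc 1 / (n : ℝ) = √(1 / (n : ℝ)) * √(1 / (n : ℝ)) := (Real.mul_self_sqrt (by positivity)).symm
      _ ≤ _ := mul_le_mul (l j) (l k) (Real.sqrt_nonneg _) (Real.sqrt_nonneg _)
  generalize √(fr (B j * B j)) * √(fr (B k * B k)) = s at b3 b4 ⊢
  have c1 : 1 / (n : ℝ) ^ 2 ≤ s := by
    refine le_trans ?_ b4
    apply one_div_le_one_div_of_le hn'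
    nlinarith
  have c2 : 3 * (n + 1 : ℝ) ^ 2 * (fr (tl A) / (n * (n + 1))) ≤ 6 * s := by
    have e : 3 * (n + 1 : ℝ) ^ 2 * (fr (tl A) / (n * (n + 1))) = 3 * ((n + 1) / n) * fr (tl A) := by field_simp
    have : (n + 1 : ℝ) / n ≤ 2 := by rw [div_le_iff₀ hn']; linarith
    rw [e]
    have hf := fr_nonneg (tl A)
    calc 3 * ((n + 1 : ℝ) / n) * fr (tl A) ≤ 3 * 2 * s := by gcongr
      _ = 6 * s := by ring
  have c3 : (3 * (n + 1 : ℝ) ^ 2 / 2) * (∫ ω, (Qf (B j) (Z ω)).re ^ 4 ∂P + ∫ ω, (Qf (B k) (Z ω)).re ^ 4 ∂P) ≤ 216 * s := by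
    calc (3 * (n + 1 : ℝ) ^ 2 / 2) * (∫ ω, (Qf (B j) (Z ω)).re ^ 4 ∂P + ∫ ω, (Qf (B k) (Z ω)).re ^ 4 ∂P) 
        ≤ (3 * (2 * n : ℝ) ^ 2 / 2) * (18 / n ^ 4 + 18 / n ^ 4) := by
          gcongr
          linarith
      _ = 216 * (1 / (n : ℝ) ^ 2) := by field_simp; norm_num
      _ ≤ 216 * s := by gcongr
  have c4 : (3 : ℝ) / n ^ 2 ≤ 3 * s := by
    have : (3 : ℝ) / n ^ 2 = 3 * (1 / n ^ 2) := by ring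
    rw [this]; gcongr
  linarith

theorem main_bound (hP : Sph P Z) (hn : 0 < n) (B : Fin d → Matrix (Fin n) (Fin n) ℂ) (hB : ∀ j, (B j).IsHermitian)
    (hT : ∀ j, (B j).trace = 0) (hO : ∀ j k, ((B j) * (B k)).trace = if j = k then (1 : ℂ) else 0)
    (f : (Fin d → ℝ) → ℝ) (hf : ∀ x y : Fin d → ℝ, |f x - f y| ≤ Real.sqrt (∑ i, (x i - y i) ^ 2)) :
    |(∫ ω, f (fun j => Real.sqrt ((n : ℝ) * ((n : ℝ) + 1)) * (Qf (B j) (Z ω)).re) ∂P) - ∫ x, f x ∂(gam d)| ≤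
      15 * ∑ j, √(fr (B j * B j)) := by
  have hn' : (0 : ℝ) < n := by exact_mod_cast hn
  set a : ℝ := Real.sqrt ((n : ℝ) * ((n : ℝ) + 1)) with ha
  have ha2 : a * a = n * (n + 1) := Real.mul_self_sqrt (by positivity)
  set w : (Fin n → ℂ) → Fin d → ℝ := fun z j => a * (Qf (B j) z).re with hw
  have hwc : Continuous w := continuous_pi fun j => continuous_const.mul (q_cont _)
  have hTc : Continuous fun z => fun j k => Tm B j k z := continuous_pi fun j => continuous_pi fun k => Tm_cont B j k
  obtain ⟨R1, hR1⟩ := sph_bdd w hwc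
  obtain ⟨R2, hR2⟩ := sph_bdd _ hTc
  have hWm : Measurable fun ω => w (Z ω) := hwc.measurable.comp hP.1
  have hWb : ∀ ω j, |w (Z ω) j| ≤ max R1 R2 := fun ω j =>
    ((norm_le_pi_norm (w (Z ω)) j).trans (hR1 _ (hP.2.1 ω))).trans (le_max_left _ _)
  have hTb : ∀ j k ω, |Tm B j k (Z ω)| ≤ max R1 R2 := fun j k ω =>
    (((norm_le_pi_norm _ k).trans (norm_le_pi_norm (fun j k => Tm B j k (Z ω)) j)).trans (hR2 _ (hP.2.1 ω))).trans (le_max_right _ _)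
  refine approx P (fun ω => w (Z ω)) hWm (max R1 R2) hWb _ (fun h hh hcs hL => ?_) f hf
  refine stein_main P (fun ω => w (Z ω)) hWm (fun j k ω => Tm B j k (Z ω)) (fun j k => (Tm_cont B j k).measurable.comp hP.1)
    (max R1 R2) hWb hTb ?_ _ (by positivity) ?_ h hh hcs hL
  · intro j F hF
    have h4 := sph_L4 P Z hP B hB (fun x => F (a • x + 0)) (hF.comp (by fun_prop)) (B j) (hB j) (hT j)
    have e : ∀ z, a • Xv B z + 0 = w z := by
      intro z; ext k; simp [hw, Xv]
    simp only [fderiv_affine F hF, e] at h4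
    have l : ∫ ω, w (Z ω) j * F (w (Z ω)) ∂P = a * ∫ ω, (Qf (B j) (Z ω)).re * F (w (Z ω)) ∂P := by
      rw [← integral_const_mul]
      congr 1; ext ω; simp only [hw]; ring
    have r : ∫ ω, ∑ k, Tm B j k (Z ω) * fderiv ℝ F (w (Z ω)) (Pi.single k 1) ∂P = ((n + 1) / a) * 
      ∫ ω, ∑ k, ((Qf ((1/2 : ℂ) • (B j * B k + B k * B j)) (Z ω)).re - (Qf (B j) (Z ω)).re * (Qf (B k) (Z ω)).re) *
      (a * fderiv ℝ F (w (Z ω)) (Pi.single k 1)) ∂P := by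
      rw [← integral_const_mul]
      have ha0 : a ≠ 0 := by
        intro h0; rw [h0] at ha2
        have : (0 : ℝ) < n * (n + 1) := by positivity
        linarith
      congr 1; ext ω; rw [Finset.mul_sum]
      refine Finset.sum_congr rfl fun k _ => ?_
      rw [Tm]; field_simp
    have ha0 : a ≠ 0 := by
      intro h0; rw [h0] at ha2
      have : (0 : ℝ) < n * (n + 1) := by positivity
      linarith
    rw [l, r, ← h4, ← mul_assoc]
    congr 1
    field_simp
    linarith
  · calc ∑ j, ∑ k, ∫ ω, (Tm B j k (Z ω) - if j = k then 1 else 0) ^ 2 ∂P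
        ≤ ∑ j, ∑ k, 225 * (√(fr (B j * B j)) * √(fr (B k * B k))) :=
          Finset.sum_le_sum fun j _ => Finset.sum_le_sum fun k _ => Tm_bound P Z hP hn B hB hT hO j k
      _ = (15 * ∑ j, √(fr (B j * B j))) ^ 2 := by
          simp only [← Finset.mul_sum, ← Finset.sum_mul]; ring
end main

theorem stmt5 :
    ∃ C : ℝ, 0 < C ∧
      ∀ (n d : ℕ) (Ω : Type u) [MeasurableSpace Ω] (P : Measure Ω)
        [IsProbabilityMeasure P]
        (Z : Ω → Fin n → ℂ) (_ : Measurable Z)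
        -- Z takes values in the unit sphere of ℂⁿ:
        (_ : ∀ ω, ∑ j, Complex.normSq (Z ω j) = 1)
        -- the law of Z is invariant under the unitary group (uniform on the sphere):
        (_ : ∀ V ∈ Matrix.unitaryGroup (Fin n) ℂ,
          Measure.map (fun ω => Matrix.mulVec V (Z ω)) P = Measure.map Z P)
        (B : Fin d → Matrix (Fin n) (Fin n) ℂ)
        (_ : ∀ j, (B j).IsHermitian) (_ : ∀ j, (B j).trace = 0)
        (_ : ∀ j k, ((B j) * (B k)).trace = if j = k then (1 : ℂ) else 0)
        (f : (Fin d → ℝ) → ℝ)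
        (_ : ∀ x y : Fin d → ℝ, |f x - f y| ≤ Real.sqrt (∑ i, (x i - y i) ^ 2)),
        |(∫ ω, f (fun j => Real.sqrt ((n : ℝ) * ((n : ℝ) + 1)) *
              (star (Z ω) ⬝ᵥ (B j).mulVec (Z ω)).re) ∂P) -
            ∫ x, f x ∂(Measure.pi fun _ : Fin d => gaussianReal 0 1)| ≤
          C * ∑ j, Real.sqrt ((((B j) * (B j) * (B j) * (B j)).trace).re) ∧
        |(∫ ω, f (fun j => Real.sqrt ((n : ℝ) * ((n : ℝ) + 1)) *
              (star (Z ω) ⬝ᵥ (B j).mulVec (Z ω)).re) ∂P) -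
            ∫ x, f x ∂(Measure.pi fun _ : Fin d => gaussianReal 0 1)| ≤
          C * ∑ j, opNormC (B j) := by
  refine ⟨15, by norm_num, ?_⟩
  intro n d Ω _ P _ Z hZ hS hU B hB hT hO f hf
  have hn : 0 < n := by
    rcases Nat.eq_zero_or_pos n with h | h
    · subst h
      obtain ⟨ω⟩ := nonempty_of_isProbabilityMeasure P
      have := hS ω
      simp at this
    · exact h
  have key := main_bound P Z ⟨hZ, hS, hU⟩ hn B hB hT hO f hf
  have hDD : ∀ j, (B j * B j).IsHermitian := fun j => by
    rw [Matrix.IsHermitian, conjTranspose_mul, (hB j).eq]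
  have e : ∀ j, ((B j) * (B j) * (B j) * (B j)).trace.re = fr (B j * B j) := fun j => by
    rw [← fr_herm _ (hDD j)]; simp only [mul_assoc]
  refine ⟨?_, ?_⟩
  · simp only [e]
    exact key
  · refine le_trans key ?_
    gcongr with j
    apply Real.sqrt_le_iff.2
    refine ⟨norm_nonneg _, ?_⟩
    have := fr_op (B j) (B j)
    have h1 : fr (B j) = 1 := by rw [← fr_herm _ (hB j), hO]; simp
    rwa [h1, mul_one] at this
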